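/- arXiv:2105.14228 — 4 statements merged into one kernel-verified Lean document; each statement's English description precedes it below -/
import Mathlib

section
/- Let f : 2^N → ℝ ∪ {-∞} be a set function whose effective domain contains the empty set. Then f is M♮-concave if and only if it satisfies (P1): for any X, Y ⊆ N with |X| < |Y|, f(X) + f(Y) ≤ max_{j ∈ Y \ X} { f(X ∪ {j}) + f(Y \ {j}) }. -/
/-- M♮-concavity of a set function with values in ℝ ∪ {-∞}. -/
def MnatConcave {α : Type*} [DecidableEq α] (f : Finset α → WithBot ℝ) : Prop :=
  ∀ X Y : Finset α, ∀ i ∈ X \ Y,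
    f X + f Y ≤
      max (f (X.erase i) + f (insert i Y))
        ((Y \ X).sup fun j => f (insert j (X.erase i)) + f ((insert i Y).erase j))

/-!
Adding a modular function `∑ j ∈ Z, p j` to `f` preserves both exchange properties. If an exchange
between `X` and `Y` fails, then suitable weights `p` split the failing inequalities, which compare
sums of two values, into a bound for each value: no admissible move at `X` or at `Y` is favourable.

(P1) implies M♮, by induction on `X ∆ Y`: suppose the exchange of `i ∈ X \ Y` fails. Applying the
induction hypothesis next to the best set `Y - j`, respectively `X + j`, shows that
`f (Y - j) < f Y` and `f (X + j) ≤ f X` for all `j ∈ Y \ X`, so that (P1) gives `|Y| ≤ |X|` and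
there is a second element `k` in `X \ Y`. By the induction hypothesis, inserting `i` improves the
best of the sets `Y + k` and `Y + k - l`; this contradicts the local consequences of (P1), which are
submodularity, the three-point and the four-point inequalities. The four-point inequality holds
because, once a modular shift has made the values `f (Z + a)` equal, the three-point inequalities
say that `f (Z + a + b)` is an ultrametric in `a` and `b`.

M♮ implies (P1), by induction on `X \ Y`: among the sets `W = Y - i + j` take a best one. The
induction hypothesis for `X` and `W` yields `k` with `f W ≤ f (W - k)`, and exchanging `j` between
`W - k` and `Y` excludes this.
-/

open Finset

section WithBotSums

lemma ne_bot_of_add_le_add {R : Type*} [Add R] [Preorder R] {a b c d : WithBot R}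
    (h : a + b ≤ c + d) (ha : a ≠ ⊥) (hb : b ≠ ⊥) : c ≠ ⊥ ∧ d ≠ ⊥ := by
  have hab : ⊥ < a + b := WithBot.bot_lt_iff_ne_bot.2 (WithBot.add_ne_bot.2 ⟨ha, hb⟩)
  exact WithBot.add_ne_bot.1 (WithBot.bot_lt_iff_ne_bot.1 (hab.trans_le h))

/-- The four-point condition for an ultrametric on the points `a`, `b`, `c`, `d`. -/
lemma add_le_add_or_of_triangles {M : Type*} [AddCommMonoid M] [LinearOrder M]
    [IsOrderedAddMonoid M] {ab ac ad bc bd cd : M}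
    (habc : ab ≤ ac ∨ ab ≤ bc) (habd : ab ≤ ad ∨ ab ≤ bd) (hcda : cd ≤ ac ∨ cd ≤ ad)
    (hcdb : cd ≤ bc ∨ cd ≤ bd) :
    ab + cd ≤ ac + bd ∨ ab + cd ≤ ad + bc := by
  wlog hle : cd ≤ ab generalizing ab ad bc cd
  · simpa only [add_comm] using this hcda hcdb habc habd (le_of_not_ge hle)
  rcases habc with habac | habbc <;> rcases habd with habad | habbd
  · exact hcdb.symm.imp (add_le_add habac) (add_le_add habad)
  · exact Or.inl (add_le_add habac (hle.trans habbd))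
  · exact Or.inr (add_le_add habad (hle.trans habbc))
  · rcases hcda with hcdac | hcdad
    · exact Or.inl (by simpa only [add_comm] using add_le_add habbd hcdac)
    · exact Or.inr (by simpa only [add_comm] using add_le_add habbc hcdad)

variable {R : Type*} [AddCommGroup R] [LinearOrder R] [IsOrderedAddMonoid R] {a b c d : WithBot R}

lemma le_right_of_add_le_add (h : a + b ≤ c + d) (hca : c ≤ a) (ha : a ≠ ⊥) : b ≤ d :=
  WithBot.le_of_add_le_add_left ha (h.trans (by gcongr))

lemma lt_right_of_add_le_add (h : a + b ≤ c + d) (hca : c < a) (hb : b ≠ ⊥) : b < d := by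
  by_contra! hdb
  exact h.not_gt <| calc
    c + d ≤ c + b := by gcongr
    _ < a + b := WithBot.add_lt_add_right hb hca

lemma exists_add_coe_le_and_lt_add_coe [Nontrivial R] (h : c + d < a + b) :
    ∃ p : R, c + p ≤ a ∧ d < b + p := by
  obtain ⟨ha, hb⟩ := WithBot.add_ne_bot.1 (bot_le.trans_lt h).ne'
  lift a to R using ha
  lift b to R using hb
  induction c with
  | bot =>
    induction d with
    | bot => exact ⟨0, by simp, by simp⟩
    | coe d =>
      obtain ⟨p, hp⟩ := exists_gt (d - b)
      exact ⟨p, by simp, by exact_mod_cast sub_lt_iff_lt_add'.1 hp⟩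
  | coe c =>
    refine ⟨a - c, by norm_cast; simp, ?_⟩
    induction d with
    | bot => simp [← WithBot.coe_add]
    | coe d =>
      norm_cast at h ⊢
      grind

end WithBotSums

section Exchange

variable {α R : Type*} [DecidableEq α] [Preorder R]

/-- The exchange inequality of M♮-concavity for `X`, `Y` and the element `i`, with the maximum over
the possible exchanges written as a disjunction. -/
def ExchangeAt [Add R] (f : Finset α → WithBot R) (X Y : Finset α) (i : α) : Prop :=
  f X + f Y ≤ f (X.erase i) + f (insert i Y) ∨
    ∃ j ∈ Y \ X, f X + f Y ≤ f (insert j (X.erase i)) + f ((insert i Y).erase j)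

/-- The exchange property defining M♮-concavity, for values in any `WithBot R`. -/
def MnatExchange [Add R] (f : Finset α → WithBot R) : Prop :=
  ∀ ⦃X Y : Finset α⦄ ⦃i : α⦄, i ∈ X \ Y → ExchangeAt f X Y i

/-- Property (P1), with the maximum over `j ∈ Y \ X` written as an existential quantifier. -/
def CardExchange [Add R] (f : Finset α → WithBot R) : Prop :=
  ∀ ⦃X Y : Finset α⦄, #X < #Y → ∃ j ∈ Y \ X, f X + f Y ≤ f (insert j X) + f (Y.erase j)

/-- A separated form of the failure of `ExchangeAt f X Y i`: every move at `X` that takes part in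
the exchange strictly decreases `f`, and no such move at `Y` increases it. -/
structure ExchangeBarrier (f : Finset α → WithBot R) (X Y : Finset α) (i : α) : Prop where
  ne_bot : f Y ≠ ⊥
  erase_lt : f (X.erase i) < f X
  insert_le : f (insert i Y) ≤ f Y
  swap_lt : ∀ j ∈ Y \ X, f (insert j (X.erase i)) < f X
  swap_le : ∀ j ∈ Y \ X, f ((insert i Y).erase j) ≤ f Y

lemma ExchangeBarrier.exists_mem_sdiff_ne {f : Finset α → WithBot R} {X Y : Finset α} {i : α}
    (hb : ExchangeBarrier f X Y i) (hi : i ∈ X \ Y) (hcard : #Y ≤ #X) :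
    ∃ k ∈ X \ Y, k ≠ i := by
  by_contra! hXY
  have hX : ∀ x ∈ X, x ∉ Y → x = i := fun x hx hxY => hXY x (mem_sdiff.2 ⟨hx, hxY⟩)
  have hYX_card : #(Y \ X) ≤ 1 := calc
    #(Y \ X) ≤ #(X \ Y) := card_sdiff_le_card_sdiff_iff.2 hcard
    _ ≤ 1 := card_le_one.2 fun x hx y hy => (hXY x hx).trans (hXY y hy).symm
  rcases (Y \ X).eq_empty_or_nonempty with hYX | ⟨j, hj⟩
  · have hYX' : Y ⊆ X := sdiff_eq_empty_iff_subset.1 hYX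
    have herase := hb.erase_lt
    have hinsert := hb.insert_le
    rw [show X.erase i = Y by grind] at herase
    rw [show insert i Y = X by grind] at hinsert
    exact hinsert.not_gt herase
  · have hYX : ∀ x ∈ Y, x ∉ X → x = j := fun x hx hxX =>
      card_le_one.1 hYX_card x (mem_sdiff.2 ⟨hx, hxX⟩) j hj
    have hlt := hb.swap_lt j hj
    have hle := hb.swap_le j hj
    rw [show insert j (X.erase i) = Y by grind] at hlt
    rw [show (insert i Y).erase j = X by grind] at hle
    exact hle.not_gt hlt

variable [Add R] {f : Finset α → WithBot R} {X Y : Finset α} {k : α}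

lemma CardExchange.ne_bot_of_subset (h : CardExchange f) (h0 : f ∅ ≠ ⊥) (hY : f Y ≠ ⊥)
    (hXY : X ⊆ Y) : f X ≠ ⊥ := by
  induction Y using Finset.strongInduction generalizing X with
  | H Y ihY =>
    induction X using Finset.induction_on with
    | empty => exact h0
    | insert x X hx ihX =>
      have hX : f X ≠ ⊥ := ihX (by grind)
      obtain ⟨j, hj, hle⟩ := h (card_lt_card (show X ⊂ Y by grind))
      obtain ⟨hjX, hjY⟩ := ne_bot_of_add_le_add hle hX hY
      rcases eq_or_ne j x with rfl | hjx
      · exact hjX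
      · exact ihY (Y.erase j) (erase_ssubset (by grind)) hjY (by grind)

lemma CardExchange.exists_insert_ne_bot (h : CardExchange f) (h0 : f ∅ ≠ ⊥) (hX : f X ≠ ⊥)
    (hY : f Y ≠ ⊥) (hk : k ∈ X \ Y) :
    f (insert k Y) ≠ ⊥ ∨ ∃ l ∈ Y \ X, f ((insert k Y).erase l) ≠ ⊥ := by
  induction Y using Finset.strongInduction with
  | H Y ih =>
    by_cases hYX : Y ⊆ X
    · exact Or.inl (h.ne_bot_of_subset h0 hX (by grind))
    obtain ⟨y, hyY, hyX⟩ := not_subset.1 hYX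
    have hyk : insert k (Y.erase y) = (insert k Y).erase y := by grind
    rcases ih (Y.erase y) (erase_ssubset hyY)
      (h.ne_bot_of_subset h0 hY (erase_subset _ _)) (by grind) with hZ | ⟨l, hl, hZ⟩
    · exact Or.inr ⟨y, by grind, hyk ▸ hZ⟩
    have hcard : #((insert k (Y.erase y)).erase l) < #Y := by grind
    obtain ⟨j, hj, hle⟩ := h hcard
    have hjZ := (ne_bot_of_add_le_add hle hZ hY).1
    have hjyl : j = y ∨ j = l := by grind
    rcases hjyl with rfl | rfl
    · exact Or.inr ⟨l, by grind, by convert hjZ using 2; grind⟩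
    · exact Or.inr ⟨y, by grind, by convert hjZ using 2; grind⟩

end Exchange

section MaximumForm

variable {α R : Type*} [DecidableEq α] [Add R] [LinearOrder R] {f : Finset α → WithBot R}
  {X Y : Finset α} {k : α}

lemma mnatExchange_iff_forall_le_max :
    MnatExchange f ↔ ∀ X Y : Finset α, ∀ i ∈ X \ Y, f X + f Y ≤
      max (f (X.erase i) + f (insert i Y))
        ((Y \ X).sup fun j => f (insert j (X.erase i)) + f ((insert i Y).erase j)) := by
  simp only [MnatExchange, ExchangeAt, le_max_iff]
  refine forall₂_congr fun X Y => forall₂_congr fun i _ => ⟨?_, ?_⟩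
  · exact Or.imp_right fun ⟨j, hj, hle⟩ => le_sup_of_le hj hle
  · intro h
    rcases eq_or_ne (f X + f Y) ⊥ with hbot | hbot
    · exact Or.inl (hbot ▸ bot_le)
    · exact h.imp_right (Finset.le_sup_iff (WithBot.bot_lt_iff_ne_bot.2 hbot)).1

lemma cardExchange_iff_forall_le_sup :
    CardExchange f ↔ ∀ X Y : Finset α, #X < #Y →
      f X + f Y ≤ (Y \ X).sup fun j => f (insert j X) + f (Y.erase j) := by
  refine forall₂_congr fun X Y => forall_congr' fun hcard => ⟨?_, fun h => ?_⟩
  · exact fun ⟨j, hj, hle⟩ => le_sup_of_le hj hle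
  · obtain ⟨j, hj, hsup⟩ := exists_mem_eq_sup (Y \ X)
      (sdiff_nonempty.2 fun hYX => hcard.not_ge (card_le_card hYX))
      fun j => f (insert j X) + f (Y.erase j)
    exact ⟨j, hj, h.trans_eq hsup⟩

lemma CardExchange.exists_max_insert_erase (h : CardExchange f) (h0 : f ∅ ≠ ⊥) (hX : f X ≠ ⊥)
    (hY : f Y ≠ ⊥) (hk : k ∈ X \ Y) :
    ∃ W, (W = insert k Y ∨ ∃ l ∈ Y \ X, W = (insert k Y).erase l) ∧ f W ≠ ⊥ ∧
      f (insert k Y) ≤ f W ∧ ∀ l ∈ Y \ X, f ((insert k Y).erase l) ≤ f W := by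
  let moves : Finset (Finset α) :=
    insert (insert k Y) ((Y \ X).image fun l => (insert k Y).erase l)
  obtain ⟨W, hW, hmax⟩ := exists_max_image moves f (insert_nonempty _ _)
  have hmax_insert : f (insert k Y) ≤ f W := hmax _ (mem_insert_self _ _)
  have hmax_swap : ∀ l ∈ Y \ X, f ((insert k Y).erase l) ≤ f W := fun l hl =>
    hmax _ (mem_insert_of_mem (mem_image_of_mem _ hl))
  refine ⟨W, by simpa [moves, eq_comm] using hW, ?_, hmax_insert, hmax_swap⟩
  rcases h.exists_insert_ne_bot h0 hX hY hk with hne | ⟨l, hl, hne⟩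
  · exact ne_bot_of_le_ne_bot hne hmax_insert
  · exact ne_bot_of_le_ne_bot hne (hmax_swap l hl)

end MaximumForm

section LocalExchange

variable {α R : Type*} [DecidableEq α] [AddCommSemigroup R] [Preorder R]
  {f : Finset α → WithBot R} {Z : Finset α} {a b c : α}

lemma MnatExchange.submodular (h : MnatExchange f) (ha : a ∉ Z) (hab : a ≠ b) :
    f Z + f (insert a (insert b Z)) ≤ f (insert a Z) + f (insert b Z) := by
  rcases h (X := insert a (insert b Z)) (Y := Z) (i := a) (by grind) with hle | ⟨j, hj, -⟩
  · rwa [erase_insert (by grind), add_comm, add_comm (f (insert b Z))] at hle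
  · grind

lemma CardExchange.submodular (h : CardExchange f) (ha : a ∉ Z) (hb : b ∉ Z) (hab : a ≠ b) :
    f Z + f (insert a (insert b Z)) ≤ f (insert a Z) + f (insert b Z) := by
  obtain ⟨j, hj, hle⟩ := h (X := Z) (Y := insert a (insert b Z)) (by grind)
  have hj' : j = a ∨ j = b := by grind
  rcases hj' with rfl | rfl
  · rwa [erase_insert (by grind)] at hle
  · rwa [insert_comm, erase_insert (by grind), insert_comm, add_comm (f (insert _ Z))] at hle

lemma CardExchange.three_point (h : CardExchange f) (ha : a ∉ Z) (hb : b ∉ Z) (hc : c ∉ Z)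
    (hab : a ≠ b) (hac : a ≠ c) (hbc : b ≠ c) :
    f (insert c Z) + f (insert a (insert b Z)) ≤ f (insert a (insert c Z)) + f (insert b Z) ∨
    f (insert c Z) + f (insert a (insert b Z)) ≤ f (insert b (insert c Z)) + f (insert a Z) := by
  obtain ⟨j, hj, hle⟩ := h (X := insert c Z) (Y := insert a (insert b Z)) (by grind)
  have hj' : j = a ∨ j = b := by grind
  rcases hj' with rfl | rfl
  · rw [erase_insert (by grind)] at hle
    exact Or.inl hle
  · rw [insert_comm _ j Z, erase_insert (by grind)] at hle
    rw [insert_comm _ j Z]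
    exact Or.inr hle

end LocalExchange

section AddModular

variable {α R : Type*}

/-- The function `f + p`, where `p` is extended to finite sets by `p Z = ∑ j ∈ Z, p j`. -/
def addModular [AddCommMonoid R] (f : Finset α → WithBot R) (p : α → R) (Z : Finset α) :
    WithBot R :=
  f Z + ((∑ j ∈ Z, p j : R) : WithBot R)

lemma addModular_ne_bot [AddCommMonoid R] {f : Finset α → WithBot R} {p : α → R} {Z : Finset α} :
    addModular f p Z ≠ ⊥ ↔ f Z ≠ ⊥ := by
  rw [addModular, WithBot.add_ne_bot]
  exact and_iff_left WithBot.coe_ne_bot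

variable [AddCommGroup R] [LinearOrder R] [IsOrderedAddMonoid R]
  {f : Finset α → WithBot R} {X Y Z : Finset α} {p : α → R}

lemma addModular_le_iff {Z' : Finset α} {r : R} (hr : ∑ j ∈ Z, p j = r + ∑ j ∈ Z', p j) :
    addModular f p Z ≤ addModular f p Z' ↔ f Z + r ≤ f Z' := by
  rw [addModular, addModular, hr, WithBot.coe_add, ← add_assoc,
    WithBot.add_le_add_iff_right WithBot.coe_ne_bot]

lemma addModular_lt_iff {Z' : Finset α} {r : R} (hr : ∑ j ∈ Z', p j = r + ∑ j ∈ Z, p j) :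
    addModular f p Z < addModular f p Z' ↔ f Z < f Z' + r := by
  rw [addModular, addModular, hr, WithBot.coe_add, ← add_assoc,
    WithBot.add_lt_add_iff_right WithBot.coe_ne_bot]

lemma addModular_add_le_add_iff {X' Y' : Finset α}
    (hsum : ∑ j ∈ X, p j + ∑ j ∈ Y, p j = ∑ j ∈ X', p j + ∑ j ∈ Y', p j) :
    addModular f p X + addModular f p Y ≤ addModular f p X' + addModular f p Y' ↔
      f X + f Y ≤ f X' + f Y' := by
  simp only [addModular]
  rw [add_add_add_comm, add_add_add_comm (f X'), ← WithBot.coe_add, ← WithBot.coe_add, hsum,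
    WithBot.add_le_add_iff_right WithBot.coe_ne_bot]

variable [DecidableEq α] {a b c d i : α}

lemma mnatExchange_addModular (h : MnatExchange f) (p : α → R) :
    MnatExchange (addModular f p) := by
  intro X Y i hi
  rw [mem_sdiff] at hi
  have hX := sum_erase_add X p hi.1
  have hY := sum_insert (f := p) hi.2
  refine (h (mem_sdiff.2 hi)).imp (fun hle => ?_) fun ⟨j, hj, hle⟩ => ⟨j, hj, ?_⟩
  · exact (addModular_add_le_add_iff (by grind)).2 hle
  · have hX' := sum_insert (f := p) (show j ∉ X.erase i by grind)
    have hY' := sum_erase_add (insert i Y) p (show j ∈ insert i Y by grind)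
    exact (addModular_add_le_add_iff (by grind)).2 hle

lemma cardExchange_addModular (h : CardExchange f) (p : α → R) :
    CardExchange (addModular f p) := by
  intro X Y hXY
  obtain ⟨j, hj, hle⟩ := h hXY
  have hX := sum_insert (f := p) (show j ∉ X by grind)
  have hY := sum_erase_add Y p (show j ∈ Y by grind)
  exact ⟨j, hj, (addModular_add_le_add_iff (by grind)).2 hle⟩

lemma CardExchange.three_point_of_eq {s : WithBot R} (h : CardExchange f) (ha : a ∉ Z) (hb : b ∉ Z)
    (hc : c ∉ Z) (hab : a ≠ b) (hac : a ≠ c) (hbc : b ≠ c) (hs : s ≠ ⊥)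
    (hfa : f (insert a Z) = s) (hfb : f (insert b Z) = s) (hfc : f (insert c Z) = s) :
    f (insert a (insert b Z)) ≤ f (insert a (insert c Z)) ∨
      f (insert a (insert b Z)) ≤ f (insert b (insert c Z)) := by
  simpa only [hfa, hfb, hfc, add_comm s, WithBot.add_le_add_iff_right hs] using
    h.three_point ha hb hc hab hac hbc

lemma CardExchange.four_point_of_eq {s : WithBot R} (h : CardExchange f)
    (ha : a ∉ Z) (hb : b ∉ Z) (hc : c ∉ Z) (hd : d ∉ Z)
    (hab : a ≠ b) (hac : a ≠ c) (had : a ≠ d) (hbc : b ≠ c) (hbd : b ≠ d) (hcd : c ≠ d)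
    (hs : s ≠ ⊥) (hfa : f (insert a Z) = s) (hfb : f (insert b Z) = s)
    (hfc : f (insert c Z) = s) (hfd : f (insert d Z) = s) :
    f (insert a (insert b Z)) + f (insert c (insert d Z)) ≤
        f (insert a (insert c Z)) + f (insert b (insert d Z)) ∨
      f (insert a (insert b Z)) + f (insert c (insert d Z)) ≤
        f (insert a (insert d Z)) + f (insert b (insert c Z)) := by
  refine add_le_add_or_of_triangles
    (h.three_point_of_eq ha hb hc hab hac hbc hs hfa hfb hfc)
    (h.three_point_of_eq ha hb hd hab had hbd hs hfa hfb hfd) ?_ ?_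
  · rw [insert_comm a c, insert_comm a d]
    exact h.three_point_of_eq hc hd ha hcd hac.symm had.symm hs hfc hfd hfa
  · rw [insert_comm b c, insert_comm b d]
    exact h.three_point_of_eq hc hd hb hcd hbc.symm hbd.symm hs hfc hfd hfb

lemma CardExchange.four_point (h : CardExchange f) (h0 : f ∅ ≠ ⊥)
    (ha : a ∉ Z) (hb : b ∉ Z) (hc : c ∉ Z) (hd : d ∉ Z)
    (hab : a ≠ b) (hac : a ≠ c) (had : a ≠ d) (hbc : b ≠ c) (hbd : b ≠ d) (hcd : c ≠ d) :
    f (insert a (insert b Z)) + f (insert c (insert d Z)) ≤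
        f (insert a (insert c Z)) + f (insert b (insert d Z)) ∨
      f (insert a (insert b Z)) + f (insert c (insert d Z)) ≤
        f (insert a (insert d Z)) + f (insert b (insert c Z)) := by
  by_cases hbot : f (insert a (insert b Z)) = ⊥ ∨ f (insert c (insert d Z)) = ⊥
  · exact Or.inl (by simp [WithBot.add_eq_bot.2 hbot])
  obtain ⟨hfab, hfcd⟩ := not_or.1 hbot
  let p : α → R := fun e => -(f (insert e Z)).unbotD 0
  have hsingle {e : α} (he : e ∉ Z) (hfe : f (insert e Z) ≠ ⊥) :
      addModular f p (insert e Z) = (∑ j ∈ Z, p j : R) := by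
    obtain ⟨r, hr⟩ := WithBot.ne_bot_iff_exists.1 hfe
    have hpe : p e = -r := by simp [p, ← hr]
    rw [addModular, sum_insert he, hpe, ← hr, ← WithBot.coe_add, add_neg_cancel_left]
  have hsum {x y : α} (hx : x ∉ Z) (hy : y ∉ Z) (hxy : x ≠ y) :
      ∑ j ∈ insert x (insert y Z), p j = p x + p y + ∑ j ∈ Z, p j := by
    rw [sum_insert (by grind), sum_insert hy, add_assoc]
  refine ((cardExchange_addModular h p).four_point_of_eq ha hb hc hd hab hac had hbc hbd hcd
    WithBot.coe_ne_bot
    (hsingle ha (h.ne_bot_of_subset h0 hfab (by grind)))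
    (hsingle hb (h.ne_bot_of_subset h0 hfab (by grind)))
    (hsingle hc (h.ne_bot_of_subset h0 hfcd (by grind)))
    (hsingle hd (h.ne_bot_of_subset h0 hfcd (by grind)))).imp
    (addModular_add_le_add_iff ?_).1 (addModular_add_le_add_iff ?_).1
  · rw [hsum ha hb hab, hsum hc hd hcd, hsum ha hc hac, hsum hb hd hbd]
    abel
  · rw [hsum ha hb hab, hsum hc hd hcd, hsum ha hd had, hsum hb hc hbc]
    abel

lemma exists_exchangeBarrier_addModular [Nontrivial R] {X Y : Finset α} {i : α} (hi : i ∈ X \ Y)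
    (hf : ¬ ExchangeAt f X Y i) :
    ∃ p : α → R, ExchangeBarrier (addModular f p) X Y i := by
  rw [ExchangeAt, not_or, not_le] at hf
  push Not at hf
  obtain ⟨hmove, hswap⟩ := hf
  have hY : f Y ≠ ⊥ := (WithBot.add_ne_bot.1 (bot_le.trans_lt hmove).ne').2
  obtain ⟨q, hq_insert, hq_erase⟩ := exists_add_coe_le_and_lt_add_coe
    (a := f Y) (b := f X) (c := f (insert i Y)) (d := f (X.erase i)) (by grind)
  have hswap_price : ∀ j ∈ Y \ X, ∃ r : R, f ((insert i Y).erase j) + r ≤ f Y ∧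
      f (insert j (X.erase i)) < f X + r := fun j hj =>
    exists_add_coe_le_and_lt_add_coe (by simpa only [add_comm] using hswap j hj)
  choose! r hr_le hr_lt using hswap_price
  let p : α → R := fun j => if j = i then q else q - r j
  have hpi : p i = q := by simp [p]
  have hpj : ∀ j, j ≠ i → p j = q - r j := fun j hj => by simp [p, hj]
  rw [mem_sdiff] at hi
  have hX := add_sum_erase X p hi.1
  have hY' := sum_insert (f := p) hi.2
  refine ⟨p, addModular_ne_bot.2 hY, (addModular_lt_iff (r := q) (by grind)).2 hq_erase,
    (addModular_le_iff (by grind)).2 hq_insert, fun j hj => ?_, fun j hj => ?_⟩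
  · have hXj := sum_insert (f := p) (show j ∉ X.erase i by grind)
    exact (addModular_lt_iff (by grind)).2 (hr_lt j hj)
  · have hYj := add_sum_erase (insert i Y) p (show j ∈ insert i Y by grind)
    exact (addModular_le_iff (by grind)).2 (hr_le j hj)

lemma exists_addModular_insert_le_and_erase_lt [Nontrivial R]
    (hf : ∀ j ∈ Y \ X, f (insert j X) + f (Y.erase j) < f X + f Y) :
    ∃ p : α → R, ∀ j ∈ Y \ X, addModular f p (insert j X) ≤ addModular f p X ∧
      addModular f p (Y.erase j) < addModular f p Y := by
  choose! p hp_le hp_lt using fun j hj => exists_add_coe_le_and_lt_add_coe (hf j hj)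
  refine ⟨p, fun j hj => ?_⟩
  have hX := sum_insert (f := p) (show j ∉ X by grind)
  have hY := add_sum_erase Y p (show j ∈ Y by grind)
  exact ⟨(addModular_le_iff (by grind)).2 (hp_le j hj),
    (addModular_lt_iff (by grind)).2 (hp_lt j hj)⟩

end AddModular

section CardToMnat

variable {α R : Type*} [DecidableEq α] [AddCommGroup R] [LinearOrder R] [IsOrderedAddMonoid R]
  {f : Finset α → WithBot R} {X Y : Finset α} {i j k l : α} {m : WithBot R}

namespace ExchangeBarrier

lemma lt_of_exchangeAt {W : Finset α} (hb : ExchangeBarrier f X Y i)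
    (hW : f W ≠ ⊥) (hWX : W \ X ⊆ Y \ X) (h : ExchangeAt f X W i) :
    f W < f (insert i W) ∨ ∃ j ∈ W \ X, f W < f ((insert i W).erase j) :=
  h.imp (fun hle => lt_right_of_add_le_add hle hb.erase_lt hW) fun ⟨j, hj, hle⟩ =>
    ⟨j, hj, lt_right_of_add_le_add hle (hb.swap_lt j (hWX hj)) hW⟩

lemma erase_lt_of_mem_sdiff (hb : ExchangeBarrier f X Y i) (h : CardExchange f)
    (ih : ∀ X' Y', symmDiff X' Y' ⊂ symmDiff X Y → i ∈ X' \ Y' → ExchangeAt f X' Y' i)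
    (hi : i ∈ X \ Y) (hj : j ∈ Y \ X) : f (Y.erase j) < f Y := by
  by_contra! hYj
  obtain ⟨k, hk, hmax⟩ := exists_max_image (Y \ X) (fun j => f (Y.erase j)) ⟨j, hj⟩
  have hYk : f Y ≤ f (Y.erase k) := hYj.trans (hmax j hj)
  have hssub : symmDiff X (Y.erase k) ⊂ symmDiff X Y :=
    (ssubset_iff_of_subset (by grind [mem_symmDiff])).2 ⟨k, by grind [mem_symmDiff]⟩
  have hYk_bot : f (Y.erase k) ≠ ⊥ := ne_bot_of_le_ne_bot hb.ne_bot hYk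
  rcases hb.lt_of_exchangeAt hYk_bot (by grind) (ih X (Y.erase k) hssub (by grind))
    with hlt | ⟨l, hl, hlt⟩
  · rw [show insert i (Y.erase k) = (insert i Y).erase k by grind] at hlt
    exact ((hb.swap_le k hk).trans hYk).not_gt hlt
  have hl' : l ∈ Y \ X := by grind
  let Z := (Y.erase k).erase l
  have hY : insert k (insert l Z) = Y := by grind
  have hexchange := h.three_point (Z := Z) (a := k) (b := l) (c := i)
    (by grind) (by grind) (by grind) (by grind) (by grind) (by grind)
  have hiZ : insert i Z = (insert i (Y.erase k)).erase l := by grind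
  have hiZk : insert k (insert i Z) = (insert i Y).erase l := by grind
  have hiZl : insert l (insert i Z) = (insert i Y).erase k := by grind
  have hZk : insert k Z = Y.erase l := by grind
  have hZl : insert l Z = Y.erase k := by grind
  rw [hY, hiZk, hiZl, hZk, hZl, hiZ, add_comm (f ((insert i (Y.erase k)).erase l))] at hexchange
  rcases hexchange with hle | hle
  · exact (le_right_of_add_le_add hle (hb.swap_le l hl') hb.ne_bot).not_gt hlt
  · exact ((le_right_of_add_le_add hle (hb.swap_le k hk) hb.ne_bot).trans (hmax l hl')).not_gt hlt

lemma insert_le_of_mem_sdiff (hb : ExchangeBarrier f X Y i) (h : CardExchange f)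
    (ih : ∀ X' Y', symmDiff X' Y' ⊂ symmDiff X Y → i ∈ X' \ Y' → ExchangeAt f X' Y' i)
    (hi : i ∈ X \ Y) (hj : j ∈ Y \ X) : f (insert j X) ≤ f X := by
  by_contra! hXj
  obtain ⟨k, hk, hmax⟩ := exists_max_image (Y \ X) (fun j => f (insert j X)) ⟨j, hj⟩
  have hXk : f X < f (insert k X) := hXj.trans_le (hmax j hj)
  have hssub : symmDiff (insert k X) Y ⊂ symmDiff X Y :=
    (ssubset_iff_of_subset (by grind [mem_symmDiff])).2 ⟨k, by grind [mem_symmDiff]⟩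
  have hXk_erase : (insert k X).erase i = insert k (X.erase i) := by grind
  rcases ih (insert k X) Y hssub (by grind) with hle | ⟨l, hl, hle⟩
  · rw [hXk_erase] at hle
    exact hb.insert_le.not_gt
      (lt_right_of_add_le_add hle ((hb.swap_lt k hk).trans hXk) hb.ne_bot)
  have hl' : l ∈ Y \ X := by grind
  let Z := X.erase i
  have hXkl : f (insert k X) ≤ f (insert k (insert l Z)) := by
    rw [show insert l ((insert k X).erase i) = insert k (insert l Z) by grind, add_comm,
      add_comm (f (insert k (insert l Z)))] at hle
    exact le_right_of_add_le_add hle (hb.swap_le l hl') hb.ne_bot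
  have hkl_bot : f (insert k (insert l Z)) ≠ ⊥ := (bot_le.trans_lt (hXk.trans_le hXkl)).ne'
  have hexchange := h.three_point (Z := Z) (a := k) (b := l) (c := i)
    (by grind) (by grind) (by grind) (by grind) (by grind) (by grind)
  have hX : insert i Z = X := by grind
  rw [hX, add_comm (f (insert k X)), add_comm (f (insert l X))] at hexchange
  rcases hexchange with hle' | hle'
  · exact hXkl.not_gt (lt_right_of_add_le_add hle' (hb.swap_lt l hl') hkl_bot)
  · exact ((hmax l hl').trans hXkl).not_gt
      (lt_right_of_add_le_add hle' (hb.swap_lt k hk) hkl_bot)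

lemma insert_insert_le (hb : ExchangeBarrier f X Y i) (h : CardExchange f) (hi : i ∉ Y)
    (hk : k ∉ Y) (hki : k ≠ i) (hm : f (insert k Y) ≤ m) : f (insert i (insert k Y)) ≤ m :=
  (le_right_of_add_le_add (h.submodular hi hk hki.symm) hb.insert_le hb.ne_bot).trans hm

lemma erase_insert_insert_le (hb : ExchangeBarrier f X Y i) (h : CardExchange f) (hi : i ∉ Y)
    (hk : k ∉ Y) (hki : k ≠ i) (hj : j ∈ Y \ X) (hm : f (insert k Y) ≤ m)
    (hmj : f ((insert k Y).erase j) ≤ m) : f ((insert i (insert k Y)).erase j) ≤ m := by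
  have hexchange := h.three_point (Z := Y.erase j) (a := i) (b := k) (c := j)
    (by grind) (by grind) (by grind) (by grind) (by grind) (by grind)
  have hik_erase : insert i (insert k (Y.erase j)) = (insert i (insert k Y)).erase j := by grind
  have hk_erase : insert k (Y.erase j) = (insert k Y).erase j := by grind
  have hi_erase : insert i (Y.erase j) = (insert i Y).erase j := by grind
  rw [insert_erase (mem_sdiff.1 hj).1, hik_erase, hk_erase, hi_erase, add_comm (f (insert k Y))]
    at hexchange
  rcases hexchange with hle | hle
  · exact (le_right_of_add_le_add hle hb.insert_le hb.ne_bot).trans hmj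
  · exact (le_right_of_add_le_add hle (hb.swap_le j hj) hb.ne_bot).trans hm

lemma erase_erase_insert_insert_le (hb : ExchangeBarrier f X Y i) (h : CardExchange f)
    (h0 : f ∅ ≠ ⊥) (hi : i ∉ Y) (hk : k ∉ Y) (hki : k ≠ i) (hj : j ∈ Y \ X) (hl : l ∈ Y \ X)
    (hjl : j ≠ l) (hmj : f ((insert k Y).erase j) ≤ m) (hml : f ((insert k Y).erase l) ≤ m) :
    f (((insert i (insert k Y)).erase l).erase j) ≤ m := by
  have hexchange := h.four_point h0 (Z := (Y.erase l).erase j) (a := l) (b := j) (c := i) (d := k)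
    (by grind) (by grind) (by grind) (by grind) (by grind) (by grind) (by grind) (by grind)
    (by grind) (by grind)
  have hY : insert l (insert j ((Y.erase l).erase j)) = Y := by grind
  have hij : insert l (insert i ((Y.erase l).erase j)) = (insert i Y).erase j := by grind
  have hil : insert j (insert i ((Y.erase l).erase j)) = (insert i Y).erase l := by grind
  have hkj : insert l (insert k ((Y.erase l).erase j)) = (insert k Y).erase j := by grind
  have hkl : insert j (insert k ((Y.erase l).erase j)) = (insert k Y).erase l := by grind
  have hik : insert i (insert k ((Y.erase l).erase j)) =
    ((insert i (insert k Y)).erase l).erase j := by grind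
  rw [hY, hij, hil, hkj, hkl, hik, add_comm (f ((insert k Y).erase j))] at hexchange
  rcases hexchange with hle | hle
  · exact (le_right_of_add_le_add hle (hb.swap_le j hj) hb.ne_bot).trans hml
  · exact (le_right_of_add_le_add hle (hb.swap_le l hl) hb.ne_bot).trans hmj

lemma eq_of_mem_sdiff (hb : ExchangeBarrier f X Y i) (h : CardExchange f) (h0 : f ∅ ≠ ⊥)
    (ih : ∀ X' Y', symmDiff X' Y' ⊂ symmDiff X Y → i ∈ X' \ Y' → ExchangeAt f X' Y' i)
    (hi : i ∈ X \ Y) (hk : k ∈ X \ Y) : k = i := by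
  by_contra hki
  rw [mem_sdiff] at hi hk
  obtain ⟨W, hW_cases, hW_bot, hmax_insert, hmax_swap⟩ :=
    h.exists_max_insert_erase h0 (bot_le.trans_lt hb.erase_lt).ne' hb.ne_bot (mem_sdiff.2 hk)
  have hWX : W \ X ⊆ Y \ X := by grind
  have hssub : symmDiff X W ⊂ symmDiff X Y :=
    (ssubset_iff_of_subset (by grind [mem_symmDiff])).2 ⟨k, by grind [mem_symmDiff]⟩
  have hstep := hb.lt_of_exchangeAt hW_bot hWX (ih X W hssub (by grind))
  have hinsert : f (insert i W) ≤ f W := by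
    rcases hW_cases with hW_eq | ⟨l, hl, hW_eq⟩
    · exact hW_eq ▸ hb.insert_insert_le h hi.2 hk.2 hki le_rfl
    · rw [show insert i W = (insert i (insert k Y)).erase l by grind]
      exact hb.erase_insert_insert_le h hi.2 hk.2 hki hl hmax_insert (hmax_swap l hl)
  have hswap : ∀ j ∈ W \ X, f ((insert i W).erase j) ≤ f W := by
    intro j hj
    rcases hW_cases with hW_eq | ⟨l, hl, hW_eq⟩
    · rw [show (insert i W).erase j = (insert i (insert k Y)).erase j by rw [hW_eq]]
      exact hb.erase_insert_insert_le h hi.2 hk.2 hki (hWX hj) hmax_insert (hmax_swap j (hWX hj))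
    · rw [show (insert i W).erase j = ((insert i (insert k Y)).erase l).erase j by grind]
      exact hb.erase_erase_insert_insert_le h h0 hi.2 hk.2 hki (hWX hj) hl (by grind)
        (hmax_swap j (hWX hj)) (hmax_swap l hl)
  rcases hstep with hlt | ⟨j, hj, hlt⟩
  · exact hinsert.not_gt hlt
  · exact (hswap j hj).not_gt hlt

end ExchangeBarrier

lemma CardExchange.exchangeAt [Nontrivial R] (h : CardExchange f) (h0 : f ∅ ≠ ⊥)
    (hi : i ∈ X \ Y) : ExchangeAt f X Y i := by
  induction hD : symmDiff X Y using Finset.strongInduction generalizing f X Y with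
  | H D ih =>
    subst hD
    by_contra hf
    obtain ⟨p, hb⟩ := exists_exchangeBarrier_addModular hi hf
    have hg := cardExchange_addModular h p
    have hg0 : addModular f p ∅ ≠ ⊥ := addModular_ne_bot.2 h0
    have ihg : ∀ X' Y', symmDiff X' Y' ⊂ symmDiff X Y → i ∈ X' \ Y' →
        ExchangeAt (addModular f p) X' Y' i := fun X' Y' hssub hi' =>
      ih _ hssub hg hg0 hi' rfl
    have hcard : #Y ≤ #X := by
      by_contra! hXY
      obtain ⟨j, hj, hle⟩ := hg hXY
      rw [add_comm, add_comm (addModular f p (insert j X))] at hle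
      have hlt := lt_right_of_add_le_add hle
        (hb.erase_lt_of_mem_sdiff hg ihg hi hj) (bot_le.trans_lt hb.erase_lt).ne'
      exact (hb.insert_le_of_mem_sdiff hg ihg hi hj).not_gt hlt
    obtain ⟨k, hk, hki⟩ := hb.exists_mem_sdiff_ne hi hcard
    exact hki (hb.eq_of_mem_sdiff hg hg0 ihg hi hk)

end CardToMnat

section MnatToCard

variable {α R : Type*} [DecidableEq α] [AddCommGroup R] [LinearOrder R] [IsOrderedAddMonoid R]
  {f : Finset α → WithBot R} {X Y : Finset α} {i j k : α}

lemma MnatExchange.exists_swap_ne_bot (h : MnatExchange f) (hX : f X ≠ ⊥) (hY : f Y ≠ ⊥)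
    (hinsert : f (insert i X) ≤ f X) (herase : f (Y.erase i) < f Y) (hi : i ∈ Y \ X) :
    ∃ j ∈ X \ Y, f (insert j (Y.erase i)) ≠ ⊥ := by
  rcases h hi with hle | ⟨j, hj, hle⟩
  · exact absurd (lt_right_of_add_le_add hle herase hX) hinsert.not_gt
  · exact ⟨j, hj, (ne_bot_of_add_le_add hle hY hX).1⟩

lemma MnatExchange.erase_lt_of_swap (h : MnatExchange f) (hY : f Y ≠ ⊥) (hj : j ∉ Y) (hi : i ∈ Y)
    (hk : k ∈ Y) (hki : k ≠ i) (herase_i : f (Y.erase i) < f Y) (herase_k : f (Y.erase k) < f Y)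
    (hW : f (insert j (Y.erase i)) ≠ ⊥)
    (hmax : f (insert j (Y.erase k)) ≤ f (insert j (Y.erase i))) :
    f ((insert j (Y.erase i)).erase k) < f (insert j (Y.erase i)) := by
  set W := insert j (Y.erase i)
  by_contra! hle
  have hWk : f (W.erase k) ≠ ⊥ := ne_bot_of_le_ne_bot hW hle
  have hYj : insert j (Y.erase k) = (insert j Y).erase k := by grind
  have hWY : (W.erase k).erase j = (Y.erase i).erase k := by grind
  rcases h (X := W.erase k) (Y := Y) (i := j) (by grind) with hex | ⟨l, hl, hex⟩
  · have hlow := h.submodular (Z := (Y.erase i).erase k) (a := i) (b := k) (by grind) hki.symm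
    rw [show insert i (insert k ((Y.erase i).erase k)) = Y by grind,
      show insert i ((Y.erase i).erase k) = Y.erase k by grind,
      insert_erase (by grind : k ∈ Y.erase i), add_comm] at hlow
    have hhigh := h.submodular (Z := W.erase k) (a := i) (b := k) (by grind) hki.symm
    rw [show insert i (insert k (W.erase k)) = insert j Y by grind,
      show insert i (W.erase k) = insert j (Y.erase k) by grind,
      insert_erase (by grind : k ∈ W)] at hhigh
    have hlt : f ((W.erase k).erase j) < f Y := by
      rw [hWY]
      exact (le_right_of_add_le_add hlow herase_k.le hY).trans_lt herase_i
    rw [add_comm] at hex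
    exact ((le_right_of_add_le_add hhigh (hmax.trans hle) hWk).trans hle).not_gt
      (lt_right_of_add_le_add hex hlt hWk)
  have hl' : l = i ∨ l = k := by grind
  rcases hl' with rfl | rfl
  · rw [show insert l ((W.erase k).erase j) = Y.erase k by grind,
      show (insert j Y).erase l = W by grind, add_comm] at hex
    exact hle.not_gt (lt_right_of_add_le_add hex herase_k hWk)
  · rw [show insert l ((W.erase l).erase j) = Y.erase i by grind, ← hYj, add_comm] at hex
    exact (hmax.trans hle).not_gt (lt_right_of_add_le_add hex herase_i hWk)

lemma MnatExchange.cardExchange [Nontrivial R] (h : MnatExchange f) : CardExchange f := by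
  intro X Y hcard
  induction hD : X \ Y using Finset.strongInduction generalizing f X Y with
  | H D ih =>
    subst hD
    by_contra! hf
    obtain ⟨i₀, hi₀Y, hi₀X⟩ := exists_mem_notMem_of_card_lt_card hcard
    have hi₀ : i₀ ∈ Y \ X := mem_sdiff.2 ⟨hi₀Y, hi₀X⟩
    obtain ⟨hX, hY⟩ := WithBot.add_ne_bot.1 (bot_le.trans_lt (hf i₀ hi₀)).ne'
    obtain ⟨p, hp⟩ := exists_addModular_insert_le_and_erase_lt hf
    have hg := mnatExchange_addModular h p
    set g := addModular f p
    obtain ⟨j, hj, hj_bot⟩ := hg.exists_swap_ne_bot (addModular_ne_bot.2 hX)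
      (addModular_ne_bot.2 hY) (hp i₀ hi₀).1 (hp i₀ hi₀).2 hi₀
    obtain ⟨i, hi, hmax⟩ := exists_max_image (Y \ X) (fun i => g (insert j (Y.erase i))) ⟨i₀, hi₀⟩
    let W := insert j (Y.erase i)
    have hXW : X \ W ⊂ X \ Y := (ssubset_iff_of_subset (by grind)).2 ⟨j, by grind⟩
    obtain ⟨k, hk, hle⟩ := ih _ hXW hg (by grind : #X < #W) rfl
    have hk' : k ∈ Y \ X := by grind
    exact (le_right_of_add_le_add hle (hp k hk').1 (addModular_ne_bot.2 hX)).not_gt <|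
      hg.erase_lt_of_swap (addModular_ne_bot.2 hY) (by grind) (by grind) (by grind) (by grind)
        (hp i hi).2 (hp k hk').2 (ne_bot_of_le_ne_bot hj_bot (hmax i₀ hi₀)) (hmax k hk')

end MnatToCard

lemma mnatExchange_iff_cardExchange {α R : Type*} [DecidableEq α] [AddCommGroup R] [LinearOrder R]
    [IsOrderedAddMonoid R] [Nontrivial R] {f : Finset α → WithBot R} (h0 : f ∅ ≠ ⊥) :
    MnatExchange f ↔ CardExchange f :=
  ⟨MnatExchange.cardExchange, fun h _ _ _ hi => h.exchangeAt h0 hi⟩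

theorem stmt_1_general {α R : Type*} [DecidableEq α] [AddCommGroup R] [LinearOrder R]
    [IsOrderedAddMonoid R] [Nontrivial R] (f : Finset α → WithBot R) (h0 : f ∅ ≠ ⊥) :
    (∀ X Y : Finset α, ∀ i ∈ X \ Y, f X + f Y ≤
      max (f (X.erase i) + f (insert i Y))
        ((Y \ X).sup fun j => f (insert j (X.erase i)) + f ((insert i Y).erase j))) ↔
      ∀ X Y : Finset α, #X < #Y →
        f X + f Y ≤ (Y \ X).sup fun j => f (insert j X) + f (Y.erase j) := by
  rw [← mnatExchange_iff_forall_le_max, ← cardExchange_iff_forall_le_sup]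
  exact mnatExchange_iff_cardExchange h0

theorem stmt_1 {α : Type*} [Fintype α] [DecidableEq α] (f : Finset α → WithBot ℝ)
    (h0 : f ∅ ≠ ⊥) :
    MnatConcave f ↔
      ∀ X Y : Finset α, X.card < Y.card →
        f X + f Y ≤ (Y \ X).sup fun j => f (insert j X) + f (Y.erase j) :=
  stmt_1_general f h0
end

section
/- A set function f : 2^N → ℝ ∪ {-∞} with nonempty effective domain is M♮-concave if and only if it satisfies the three conditions (P2), (P3), (P4): (P2) for |X| = |Y| and i ∈ X\Y, f(X)+f(Y) ≤ max_{j∈Y\X}{f(X−i+j)+f(Y+i−j)}; (P3) for |X| < |Y| and i ∈ X\Y, the same inequality; (P4) for |X| > |Y| and i ∈ X\Y, f(X)+f(Y) ≤ max( f(X−i)+f(Y+i), max_{j∈Y\X}{f(X−i+j)+f(Y+i−j)} ). -/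
/-!
The content is that, for `#X ≤ #Y`, the pure exchange `X - i + j`, `Y + i - j` always suffices.

Locally, fix `Z` and put `d a b = f (Z + a + b) - f (Z + a) - f (Z + b)`. Among `d a b`, `d a c`,
`d b c` the maximum is attained at least twice, so `d` behaves like an ultrametric, and the
four-point condition of ultrametrics gives the exchange inequality for `Z + a + b` and `Z + c + d`
without the term that moves a single element.

Globally, induct on `#(Y \ X)`. Replace `Y` by `Y' = K ∪ (Y - v)` with `K ⊆ X \ Y` empty or a
singleton other than `{i}`, where `v ∈ Y \ X` maximizes `f (X - i + v) + f (K ∪ (Y - v))`. The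
element `w` exchanged with `i` for `(X, Y')` works for `(X, Y)`, or else `v` does: local exchange
between `Y` and `Y' + i - w` decides which, and maximality of `v` settles the second case.
-/

open Finset

theorem add_le_max_add_add_of_isosceles {M : Type*} [AddCommMonoid M] [LinearOrder M]
    [IsOrderedAddMonoid M] {ab ac ad bc bd cd : M} (habc : ab ≤ max ac bc) (habd : ab ≤ max ad bd)
    (hacd : cd ≤ max ac ad) (hbcd : cd ≤ max bc bd) :
    ab + cd ≤ max (ac + bd) (ad + bc) := by
  have h : (ab ≤ ac ∧ cd ≤ bd) ∨ (ab ≤ bd ∧ cd ≤ ac) ∨ (ab ≤ ad ∧ cd ≤ bc) ∨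
      (ab ≤ bc ∧ cd ≤ ad) := by grind
  rw [le_max_iff]
  rcases h with ⟨h₁, h₂⟩ | ⟨h₁, h₂⟩ | ⟨h₁, h₂⟩ | ⟨h₁, h₂⟩
  · exact .inl (add_le_add h₁ h₂)
  · exact .inl (add_comm ac bd ▸ add_le_add h₁ h₂)
  · exact .inr (add_le_add h₁ h₂)
  · exact .inr (add_comm ad bc ▸ add_le_add h₁ h₂)

theorem ne_bot_of_add_le_add_s3 {M : Type*} [Add M] [PartialOrder M] {p q r s : WithBot M} (hp : p ≠ ⊥)
    (hq : q ≠ ⊥) (h : p + q ≤ r + s) : r ≠ ⊥ ∧ s ≠ ⊥ :=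
  WithBot.add_ne_bot.1 (ne_bot_of_le_ne_bot (WithBot.add_ne_bot.2 ⟨hp, hq⟩) h)

theorem add_le_add_of_exchange {M : Type*} [AddCommMonoid M] [PartialOrder M]
    [IsOrderedCancelAddMonoid M] {x y y' b' z p q r : WithBot M} (hy' : y' ≠ ⊥) (hb' : b' ≠ ⊥)
    (hx : x + y' ≤ p + b') (hy : y + b' ≤ q + z) (hp : p + z ≤ r + y') : x + y ≤ r + q := by
  refine WithBot.le_of_add_le_add_right (WithBot.add_ne_bot.2 ⟨hy', hb'⟩) ?_
  calc
    (x + y) + (y' + b') = (x + y') + (y + b') := add_add_add_comm ..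
    _ ≤ (p + b') + (q + z) := add_le_add hx hy
    _ = (p + z) + (q + b') := by ac_rfl
    _ ≤ (r + y') + (q + b') := by gcongr
    _ = (r + q) + (y' + b') := add_add_add_comm ..

section Exchange

variable {α : Type*} [DecidableEq α] {X Y K : Finset α} {v : α}

theorem union_erase_sdiff_of_subset (hK : K ⊆ X) : (K ∪ Y.erase v) \ X = (Y \ X).erase v := by
  rw [union_sdiff_distrib, sdiff_eq_empty_iff_subset.2 hK, empty_union, erase_sdiff_comm]

theorem card_union_erase_add_one (hKY : Disjoint K Y) (hv : v ∈ Y) :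
    #(K ∪ Y.erase v) + 1 = #Y + #K := by
  rw [card_union_of_disjoint (hKY.mono_right (erase_subset v Y)), add_assoc,
    card_erase_add_one hv, add_comm]

theorem exists_insert_erase_eq_of_card_sdiff_le_one {i : α} (hi : i ∈ X \ Y)
    (hle : #X ≤ #Y) (hone : #(Y \ X) ≤ 1) :
    ∃ j ∈ Y \ X, insert j (X.erase i) = Y ∧ (insert i Y).erase j = X := by
  have hcard := card_sdiff_le_card_sdiff_iff.2 hle
  obtain ⟨j, hj⟩ := card_pos.1 ((card_pos.2 ⟨i, hi⟩).trans_le hcard)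
  have hi_unique : ∀ u ∈ X, u ∉ Y → u = i := fun u hu hu' =>
    card_le_one.1 (hcard.trans hone) u (mem_sdiff.2 ⟨hu, hu'⟩) i hi
  have hj_unique : ∀ u ∈ Y, u ∉ X → u = j := fun u hu hu' =>
    card_le_one.1 hone u (mem_sdiff.2 ⟨hu, hu'⟩) j hj
  exact ⟨j, hj, by grind, by grind⟩

end Exchange

namespace MnatConcave

variable {α : Type*} [DecidableEq α] {f : Finset α → WithBot ℝ}

theorem move_or_exists_swap (hf : MnatConcave f) {X Y : Finset α} {i : α} (hi : i ∈ X \ Y) :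
    f X + f Y ≤ f (X.erase i) + f (insert i Y) ∨
      ∃ j ∈ Y \ X, f X + f Y ≤ f (insert j (X.erase i)) + f ((insert i Y).erase j) := by
  rcases eq_bot_or_bot_lt (f X + f Y) with hbot | hbot
  · exact .inl (hbot ▸ bot_le)
  · rw [← Finset.le_sup_iff hbot, ← le_max_iff]
    exact hf X Y i hi

section LocalExchange

variable {Z : Finset α} {a b c d : α}

theorem insert_insert_add_insert_le (hf : MnatConcave f) (ha : a ∉ Z) (hc : c ∉ Z) (hab : a ≠ b)
    (hac : a ≠ c) (hbc : b ≠ c) :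
    f (insert a (insert b Z)) + f (insert c Z) ≤
      max (f (insert a (insert c Z)) + f (insert b Z))
        (f (insert b (insert c Z)) + f (insert a Z)) := by
  have hdiff : insert c Z \ insert a (insert b Z) = {c} := by grind
  have hab' : (insert a (insert b Z)).erase a = insert b Z := by grind
  have hac' : (insert a (insert c Z)).erase c = insert a Z := by grind
  have h := hf (insert a (insert b Z)) (insert c Z) a (by grind)
  rwa [hdiff, sup_singleton, hab', hac', add_comm (f (insert b Z)), insert_comm c b] at h

theorem insert_ne_bot_of_lt (hf : MnatConcave f) (ha : a ∉ Z) (hc : c ∉ Z) (hd : d ∉ Z)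
    (hab : a ≠ b) (hac : a ≠ c) (had : a ≠ d) (hcd : c ≠ d)
    (hlt : max (f (insert a (insert c Z)) + f (insert b (insert d Z)))
        (f (insert a (insert d Z)) + f (insert b (insert c Z))) <
      f (insert a (insert b Z)) + f (insert c (insert d Z))) :
    f (insert b Z) ≠ ⊥ := by
  have hb' : (insert a (insert b Z)).erase a = insert b Z := by grind
  have had' : (insert a (insert c (insert d Z))).erase c = insert a (insert d Z) := by grind
  have hac' : (insert a (insert c (insert d Z))).erase d = insert a (insert c Z) := by grind
  rcases hf.move_or_exists_swap (X := insert a (insert b Z)) (Y := insert c (insert d Z)) (i := a)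
    (by grind) with hmove | ⟨j, hj, hswap⟩
  · rw [hb'] at hmove
    exact (WithBot.add_ne_bot.1 (ne_bot_of_le_ne_bot (ne_bot_of_gt hlt) hmove)).1
  · refine absurd hlt (not_lt_of_ge (hswap.trans ?_))
    rw [hb', insert_comm j b, add_comm]
    obtain rfl | rfl : j = c ∨ j = d := by grind
    · exact had' ▸ le_max_right _ _
    · exact hac' ▸ le_max_left _ _

theorem isosceles_of_insert_eq_coe (hf : MnatConcave f) {sa sb sc : ℝ} (ha : a ∉ Z) (hc : c ∉ Z)
    (hab : a ≠ b) (hac : a ≠ c) (hbc : b ≠ c) (hsa : f (insert a Z) = sa)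
    (hsb : f (insert b Z) = sb) (hsc : f (insert c Z) = sc) :
    f (insert a (insert b Z)) + ((-(sa + sb) : ℝ) : WithBot ℝ) ≤
      max (f (insert a (insert c Z)) + ((-(sa + sc) : ℝ) : WithBot ℝ))
        (f (insert b (insert c Z)) + ((-(sb + sc) : ℝ) : WithBot ℝ)) := by
  have h := add_le_add_left (hf.insert_insert_add_insert_le ha hc hab hac hbc)
    ((-(sa + sb + sc) : ℝ) : WithBot ℝ)
  rw [hsa, hsb, hsc, ← max_add_add_right] at h
  simp only [add_assoc, ← WithBot.coe_add] at h
  convert h using 4 <;> ring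

theorem four_point_of_insert_ne_bot (hf : MnatConcave f) (ha : a ∉ Z) (hb : b ∉ Z)
    (hc : c ∉ Z) (hd : d ∉ Z) (hab : a ≠ b) (hac : a ≠ c) (had : a ≠ d) (hbc : b ≠ c)
    (hbd : b ≠ d) (hcd : c ≠ d) (hfa : f (insert a Z) ≠ ⊥) (hfb : f (insert b Z) ≠ ⊥)
    (hfc : f (insert c Z) ≠ ⊥) (hfd : f (insert d Z) ≠ ⊥) :
    f (insert a (insert b Z)) + f (insert c (insert d Z)) ≤
      max (f (insert a (insert c Z)) + f (insert b (insert d Z)))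
        (f (insert a (insert d Z)) + f (insert b (insert c Z))) := by
  obtain ⟨sa, hsa⟩ := WithBot.ne_bot_iff_exists.1 hfa
  obtain ⟨sb, hsb⟩ := WithBot.ne_bot_iff_exists.1 hfb
  obtain ⟨sc, hsc⟩ := WithBot.ne_bot_iff_exists.1 hfc
  obtain ⟨sd, hsd⟩ := WithBot.ne_bot_iff_exists.1 hfd
  have shift (x y : WithBot ℝ) {p q : ℝ} (hpq : p + q = -(sa + sb + sc + sd)) :
      (x + p) + (y + q) = (x + y) + ((-(sa + sb + sc + sd) : ℝ) : WithBot ℝ) := by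
    rw [add_add_add_comm, ← WithBot.coe_add, hpq]
  have hacd := hf.isosceles_of_insert_eq_coe hc ha hcd hac.symm had.symm hsc.symm hsd.symm hsa.symm
  have hbcd := hf.isosceles_of_insert_eq_coe hc hb hcd hbc.symm hbd.symm hsc.symm hsd.symm hsb.symm
  rw [insert_comm c a, insert_comm d a, add_comm sc sa, add_comm sd sa] at hacd
  rw [insert_comm c b, insert_comm d b, add_comm sc sb, add_comm sd sb] at hbcd
  have key := add_le_max_add_add_of_isosceles
    (hf.isosceles_of_insert_eq_coe ha hc hab hac hbc hsa.symm hsb.symm hsc.symm)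
    (hf.isosceles_of_insert_eq_coe ha hd hab had hbd hsa.symm hsb.symm hsd.symm) hacd hbcd
  rw [shift _ _ (by ring), shift _ _ (by ring), shift _ _ (by ring), max_add_add_right] at key
  exact WithBot.le_of_add_le_add_right WithBot.coe_ne_bot key

theorem four_point (hf : MnatConcave f) (ha : a ∉ Z) (hb : b ∉ Z)
    (hc : c ∉ Z) (hd : d ∉ Z) (hab : a ≠ b) (hac : a ≠ c) (had : a ≠ d) (hbc : b ≠ c)
    (hbd : b ≠ d) (hcd : c ≠ d) :
    f (insert a (insert b Z)) + f (insert c (insert d Z)) ≤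
      max (f (insert a (insert c Z)) + f (insert b (insert d Z)))
        (f (insert a (insert d Z)) + f (insert b (insert c Z))) := by
  by_contra! hlt
  have hfb : f (insert b Z) ≠ ⊥ := hf.insert_ne_bot_of_lt ha hc hd hab hac had hcd hlt
  have hfa : f (insert a Z) ≠ ⊥ := hf.insert_ne_bot_of_lt hb hc hd hab.symm hbc hbd hcd
    (by simpa only [insert_comm, add_comm, max_comm] using hlt)
  have hfd : f (insert d Z) ≠ ⊥ := hf.insert_ne_bot_of_lt hc ha hb hcd hac.symm hbc.symm hab
    (by simpa only [insert_comm, add_comm, max_comm] using hlt)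
  have hfc : f (insert c Z) ≠ ⊥ := hf.insert_ne_bot_of_lt hd ha hb hcd.symm had.symm hbd.symm hab
    (by simpa only [insert_comm, add_comm, max_comm] using hlt)
  exact hlt.not_ge
    (hf.four_point_of_insert_ne_bot ha hb hc hd hab hac had hbc hbd hcd hfa hfb hfc hfd)

end LocalExchange

-- The two sets on the left differ in at most two elements each way, and their intersection plays
-- the role of `Z` in the three-term inequality (`K = ∅`) or the four-point condition (`#K = 1`).
theorem local_exchange_le (hf : MnatConcave f) {Y K : Finset α} {i v w : α} (hi : i ∉ Y)
    (hv : v ∈ Y) (hw : w ∈ Y) (hwv : w ≠ v) (hK : #K ≤ 1) (hKY : Disjoint K (insert i Y)) :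
    f Y + f ((insert i (K ∪ Y.erase v)).erase w) ≤
      max (f ((insert i Y).erase w) + f (K ∪ Y.erase v))
        (f ((insert i Y).erase v) + f (K ∪ Y.erase w)) := by
  obtain ⟨Z, hvZ, hwZ, rfl⟩ : ∃ Z, v ∉ Z ∧ w ∉ Z ∧ Y = insert v (insert w Z) :=
    ⟨(Y.erase v).erase w, by grind, by grind, by grind⟩
  have hiv : (insert i (insert v (insert w Z))).erase w = insert v (insert i Z) := by grind
  have hiw : (insert i (insert v (insert w Z))).erase v = insert w (insert i Z) := by grind
  have hKv : K ∪ (insert v (insert w Z)).erase v = K ∪ insert w Z := by grind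
  have hKw : K ∪ (insert v (insert w Z)).erase w = K ∪ insert v Z := by grind
  have hKi : (insert i (K ∪ insert w Z)).erase w = K ∪ insert i Z := by grind
  rw [hiv, hiw, hKv, hKw, hKi]
  rcases Nat.le_one_iff_eq_zero_or_eq_one.1 hK with hK | hK
  · obtain rfl := card_eq_zero.1 hK
    simpa using
      hf.insert_insert_add_insert_le (c := i) hvZ (by grind) hwv.symm (by grind) (by grind)
  · obtain ⟨k, rfl⟩ := card_eq_one.1 hK
    simpa [insert_comm k i, add_comm (f (insert w (insert i Z)))] using
      hf.four_point (c := i) (d := k) hvZ hwZ (by grind) (by grind) hwv.symm (by grind) (by grind)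
        (by grind) (by grind) (by grind)

theorem exists_erase_ne_bot (hf : MnatConcave f) {X Y : Finset α} (hX : f X ≠ ⊥) (hY : f Y ≠ ⊥)
    (hlt : #X < #Y) : ∃ j ∈ Y \ X, f (Y.erase j) ≠ ⊥ := by
  induction hn : #(Y \ X) using Nat.strong_induction_on generalizing Y with
  | _ n ih =>
  obtain ⟨j, hj⟩ : (Y \ X).Nonempty := sdiff_nonempty.2 fun h => hlt.not_ge (card_le_card h)
  rcases hf.move_or_exists_swap hj with hmove | ⟨k, hk, hswap⟩
  · exact ⟨j, hj, (ne_bot_of_add_le_add_s3 hY hX hmove).1⟩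
  have hjY := (mem_sdiff.1 hj).1
  obtain ⟨hkX, hkY⟩ := mem_sdiff.1 hk
  have hsdiff : insert k (Y.erase j) \ X = (Y \ X).erase j :=
    union_erase_sdiff_of_subset (singleton_subset_iff.2 hkX)
  have hcard : #(insert k (Y.erase j)) = #Y := by
    simpa using card_union_erase_add_one (disjoint_singleton_left.2 hkY) hjY
  obtain ⟨l, hl, hl_dom⟩ := ih _ (hn ▸ hsdiff ▸ card_erase_lt_of_mem hj)
    (ne_bot_of_add_le_add_s3 hY hX hswap).1 (hcard ▸ hlt) rfl
  rw [hsdiff, mem_erase] at hl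
  have hlocal := hf.local_exchange_le (K := ∅) hkY hjY (mem_sdiff.1 hl.2).1 hl.1
    (by simp) (disjoint_empty_left _)
  simp only [empty_union] at hlocal
  rcases le_max_iff.1 hlocal with h | h
  · exact ⟨j, hj, (ne_bot_of_add_le_add_s3 hY hl_dom h).2⟩
  · exact ⟨l, hl.2, (ne_bot_of_add_le_add_s3 hY hl_dom h).2⟩

theorem exists_union_erase_ne_bot (hf : MnatConcave f) {X Y : Finset α} {i : α} (hX : f X ≠ ⊥)
    (hY : f Y ≠ ⊥) (hle : #X ≤ #Y) (hYX : 1 < #(Y \ X)) :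
    ∃ K ⊆ X, Disjoint K (insert i Y) ∧ #K ≤ 1 ∧ #X < #Y + #K ∧
      ∃ j ∈ Y \ X, f (K ∪ Y.erase j) ≠ ⊥ := by
  rcases hle.lt_or_eq with hlt | heq
  · obtain ⟨j, hj, hdom⟩ := hf.exists_erase_ne_bot hX hY hlt
    exact ⟨∅, empty_subset X, disjoint_empty_left _, by simp, by simpa using hlt, j, hj,
      by simpa using hdom⟩
  obtain ⟨k, hk, hki⟩ := exists_mem_ne (card_sdiff_comm heq ▸ hYX) i
  refine ⟨{k}, by grind, disjoint_singleton_left.2 (by grind), by simp, by simp [heq], ?_⟩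
  simp only [singleton_union]
  rcases hf.move_or_exists_swap hk with hmove | ⟨j, hj, hswap⟩
  · obtain ⟨j, hj, hdom⟩ := hf.exists_erase_ne_bot hX (ne_bot_of_add_le_add_s3 hX hY hmove).2
      (by grind)
    refine ⟨j, by grind, ?_⟩
    rwa [← erase_insert_of_ne (by grind)]
  · refine ⟨j, hj, ?_⟩
    rw [← erase_insert_of_ne (by grind)]
    exact (ne_bot_of_add_le_add_s3 hX hY hswap).2

theorem exists_swap_of_card_le (hf : MnatConcave f) {X Y : Finset α} {i : α} (hX : f X ≠ ⊥)
    (hY : f Y ≠ ⊥) (hi : i ∈ X \ Y) (hle : #X ≤ #Y) :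
    ∃ j ∈ Y \ X, f X + f Y ≤ f (insert j (X.erase i)) + f ((insert i Y).erase j) := by
  induction hn : #(Y \ X) using Nat.strong_induction_on generalizing Y with
  | _ n ih =>
  rcases le_or_gt #(Y \ X) 1 with hone | hmany
  · obtain ⟨j, hj, hXY, hYX⟩ := exists_insert_erase_eq_of_card_sdiff_le_one hi hle hone
    exact ⟨j, hj, by rw [hXY, hYX, add_comm]⟩
  obtain ⟨K, hKX, hKY, hK_card, hK_lt, j, hj, hj_dom⟩ :=
    hf.exists_union_erase_ne_bot (i := i) hX hY hle hmany
  obtain ⟨v, hv, hv_max⟩ := exists_max_image {u ∈ Y \ X | f (K ∪ Y.erase u) ≠ ⊥}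
    (fun u => f (insert u (X.erase i)) + f (K ∪ Y.erase u)) ⟨j, mem_filter.2 ⟨hj, hj_dom⟩⟩
  simp only [mem_filter, and_imp] at hv hv_max
  obtain ⟨hv, hv_dom⟩ := hv
  obtain ⟨hiX, hiY⟩ := mem_sdiff.1 hi
  have hvY := (mem_sdiff.1 hv).1
  have hiY' : i ∉ K ∪ Y.erase v := notMem_union.2
    ⟨disjoint_right.1 hKY (mem_insert_self i Y), fun h => hiY (mem_of_mem_erase h)⟩
  have hsdiff : (K ∪ Y.erase v) \ X = (Y \ X).erase v := union_erase_sdiff_of_subset hKX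
  have hcard := card_union_erase_add_one (hKY.mono_right (subset_insert i Y)) hvY
  obtain ⟨w, hw, hw_le⟩ := ih _ (hn ▸ hsdiff ▸ card_erase_lt_of_mem hv) hv_dom
    (mem_sdiff.2 ⟨hiX, hiY'⟩) (by lia) rfl
  rw [hsdiff, mem_erase] at hw
  have hw_dom := (ne_bot_of_add_le_add_s3 hX hv_dom hw_le).2
  rcases le_max_iff.1 (hf.local_exchange_le hiY hvY (mem_sdiff.1 hw.2).1 hw.1 hK_card hKY)
    with hlocal | hlocal
  · exact ⟨w, hw.2, add_le_add_of_exchange hv_dom hw_dom hw_le hlocal le_rfl⟩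
  · exact ⟨v, hv, add_le_add_of_exchange hv_dom hw_dom hw_le hlocal
      (hv_max w hw.2 (ne_bot_of_add_le_add_s3 hY hw_dom hlocal).2)⟩

theorem le_sup_swap_of_card_le (hf : MnatConcave f) {X Y : Finset α} {i : α} (hle : #X ≤ #Y)
    (hi : i ∈ X \ Y) :
    f X + f Y ≤ (Y \ X).sup fun j => f (insert j (X.erase i)) + f ((insert i Y).erase j) := by
  by_cases hX : f X = ⊥
  · simp [hX]
  by_cases hY : f Y = ⊥
  · simp [hY]
  obtain ⟨j, hj, hswap⟩ := hf.exists_swap_of_card_le hX hY hi hle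
  exact le_sup_of_le hj hswap

end MnatConcave

theorem stmt_3_general {α : Type*} [DecidableEq α] (f : Finset α → WithBot ℝ) :
    MnatConcave f ↔
      ((∀ X Y : Finset α, X.card = Y.card → ∀ i ∈ X \ Y,
          f X + f Y ≤
            (Y \ X).sup fun j => f (insert j (X.erase i)) + f ((insert i Y).erase j)) ∧
       (∀ X Y : Finset α, X.card < Y.card → ∀ i ∈ X \ Y,
          f X + f Y ≤
            (Y \ X).sup fun j => f (insert j (X.erase i)) + f ((insert i Y).erase j)) ∧
       (∀ X Y : Finset α, X.card > Y.card → ∀ i ∈ X \ Y,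
          f X + f Y ≤
            max (f (X.erase i) + f (insert i Y))
              ((Y \ X).sup fun j =>
                f (insert j (X.erase i)) + f ((insert i Y).erase j)))) := by
  refine ⟨fun hf => ⟨fun X Y hcard i hi => hf.le_sup_swap_of_card_le hcard.le hi,
    fun X Y hcard i hi => hf.le_sup_swap_of_card_le hcard.le hi,
    fun X Y _ i hi => hf X Y i hi⟩, fun ⟨hP2, hP3, hP4⟩ X Y i hi => ?_⟩
  rcases lt_trichotomy #X #Y with hcard | hcard | hcard
  · exact le_max_of_le_right (hP3 X Y hcard i hi)
  · exact le_max_of_le_right (hP2 X Y hcard i hi)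
  · exact hP4 X Y hcard i hi

theorem stmt_3 {α : Type*} [Fintype α] [DecidableEq α] (f : Finset α → WithBot ℝ)
    (hne : ∃ X, f X ≠ ⊥) :
    MnatConcave f ↔
      ((∀ X Y : Finset α, X.card = Y.card → ∀ i ∈ X \ Y,
          f X + f Y ≤
            (Y \ X).sup fun j => f (insert j (X.erase i)) + f ((insert i Y).erase j)) ∧
       (∀ X Y : Finset α, X.card < Y.card → ∀ i ∈ X \ Y,
          f X + f Y ≤
            (Y \ X).sup fun j => f (insert j (X.erase i)) + f ((insert i Y).erase j)) ∧
       (∀ X Y : Finset α, X.card > Y.card → ∀ i ∈ X \ Y,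
          f X + f Y ≤
            max (f (X.erase i) + f (insert i Y))
              ((Y \ X).sup fun j =>
                f (insert j (X.erase i)) + f ((insert i Y).erase j)))) :=
  stmt_3_general f
end

section
/- A set function f : 2^N → ℝ ∪ {-∞} is M♮-concave if and only if its effective domain dom f is an M♮-convex family (satisfies the g-matroid exchange axiom) and f satisfies the three local exchange conditions (L1): f(Z+i+j)+f(Z) ≤ f(Z+i)+f(Z+j) for Z ⊆ N and distinct i,j ∉ Z; (L2): f(Z+i+j)+f(Z+k) ≤ max( f(Z+i+k)+f(Z+j), f(Z+j+k)+f(Z+i) ) for distinct i,j,k ∉ Z; and (L3): f(Z+i+j)+f(Z+k+l) ≤ max( f(Z+i+k)+f(Z+j+l), f(Z+j+k)+f(Z+i+l) ) for distinct i,j,k,l ∉ Z. -/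
/-- The exchange axiom for an M♮-convex family (g-matroid). -/
def MnatFamily {α : Type*} [DecidableEq α] (F : Set (Finset α)) : Prop :=
  ∀ X ∈ F, ∀ Y ∈ F, ∀ i ∈ X \ Y,
    (X.erase i ∈ F ∧ insert i Y ∈ F) ∨
    ∃ j ∈ Y \ X, insert j (X.erase i) ∈ F ∧ (insert i Y).erase j ∈ F

/-!
The easy direction specializes the exchange inequality to sets at distance at most four; only (L3)
needs an extra step, because there the exchange may also move `i` without a partner. Applying it to
both `i` and `j` and adding (L1) twice disposes of this alternative.

For the converse, adjoin dummy elements, so that `f` becomes a function `g` on sets of one fixed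
size, for which (L1)–(L3) together become the single condition (L3). It remains to show that `g` is
a valuated matroid, i.e. that every `u ∈ X \ Y` can be exchanged. This goes by induction on
`#(Y \ X)`: if `X \ Y` has a second element `u₀`, replace `Y` by `Y + u₀ - v₀`, where `v₀ ∈ Y \ X`
maximizes `g (Y + u₀ - v) + g (X - u + v)`. By (L3), if `v` is exchangeable with `u` for the new
pair, then `v` or `v₀` is exchangeable with `u` for the old one.
-/

open Finset

section LocalExchange

variable {α β Γ : Type*}

section Definitions

/-- The effective domain of a set function; `⊥` plays the role of `-∞`. -/
def effDom (f : Finset α → WithBot Γ) : Set (Finset α) := {X | f X ≠ ⊥}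

/-- The restriction of a set function to the sets of size `n`, extended by `⊥`. -/
def layer (n : ℕ) (g : Finset α → WithBot Γ) (S : Finset α) : WithBot Γ :=
  if #S = n then g S else ⊥

variable [DecidableEq α]

/-- The basis exchange axiom of matroids, in the form that prescribes the element entering `T`. -/
def BasisExchange (F : Set (Finset α)) : Prop :=
  ∀ S ∈ F, ∀ T ∈ F, ∀ u ∈ S \ T, ∃ v ∈ T \ S, (insert u T).erase v ∈ F

variable [Add Γ] [LinearOrder Γ]

/-- The element `u` of `X` can be swapped with some element of `Y \ X` without decreasing
`g X + g Y`; this is the exchange property of valuated matroids. -/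
def ExchangeableAt (g : Finset α → WithBot Γ) (X Y : Finset α) (u : α) : Prop :=
  ∃ v ∈ Y \ X, g X + g Y ≤ g (insert v (X.erase u)) + g ((insert u Y).erase v)

/-- The local exchange condition (L1): submodularity at sets of distance two. -/
def LocalExchange₁ (f : Finset α → WithBot Γ) : Prop :=
  ∀ Z : Finset α, ∀ i j : α, i ∉ Z → j ∉ Z → i ≠ j →
    f (insert i (insert j Z)) + f Z ≤ f (insert i Z) + f (insert j Z)

/-- The local exchange condition (L2), for sets of consecutive sizes at distance three. -/
def LocalExchange₂ (f : Finset α → WithBot Γ) : Prop :=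
  ∀ Z : Finset α, ∀ i j k : α, i ∉ Z → j ∉ Z → k ∉ Z → i ≠ j → i ≠ k → j ≠ k →
    f (insert i (insert j Z)) + f (insert k Z) ≤
      max (f (insert i (insert k Z)) + f (insert j Z)) (f (insert j (insert k Z)) + f (insert i Z))

/-- The local exchange condition (L3), for sets of equal size at distance four. It is also the
local exchange condition of valuated matroids. -/
def LocalExchange₃ (f : Finset α → WithBot Γ) : Prop :=
  ∀ Z : Finset α, ∀ i j k l : α, i ∉ Z → j ∉ Z → k ∉ Z → l ∉ Z →
    i ≠ j → i ≠ k → i ≠ l → j ≠ k → j ≠ l → k ≠ l →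
    f (insert i (insert j Z)) + f (insert k (insert l Z)) ≤
      max (f (insert i (insert k Z)) + f (insert j (insert l Z)))
        (f (insert j (insert k Z)) + f (insert i (insert l Z)))

end Definitions

section MnatConcave

variable [DecidableEq α] {f : Finset α → WithBot ℝ}

lemma mnatConcave_iff_exchangeableAt :
    MnatConcave f ↔ ∀ X Y : Finset α, ∀ i ∈ X \ Y,
      f X + f Y ≤ f (X.erase i) + f (insert i Y) ∨ ExchangeableAt f X Y i := by
  refine forall₄_congr fun X Y i _ => ?_
  rcases eq_bot_or_bot_lt (f X + f Y) with h | h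
  · simp [h]
  · rw [le_max_iff, Finset.le_sup_iff h, ExchangeableAt]

lemma MnatConcave.mnatFamily_effDom (hf : MnatConcave f) : MnatFamily (effDom f) := by
  intro X hX Y hY i hi
  have mem_of_le {A B : Finset α} (h : f X + f Y ≤ f A + f B) : A ∈ effDom f ∧ B ∈ effDom f :=
    WithBot.add_ne_bot.1 (ne_bot_of_le_ne_bot (WithBot.add_ne_bot.2 ⟨hX, hY⟩) h)
  rcases mnatConcave_iff_exchangeableAt.1 hf X Y i hi with h | ⟨j, hj, h⟩
  · exact .inl (mem_of_le h)
  · exact .inr ⟨j, hj, mem_of_le h⟩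

lemma MnatConcave.localExchange₁ (hf : MnatConcave f) : LocalExchange₁ f := by
  intro Z i j hi _ hij
  have erase_i : (insert i (insert j Z)).erase i = insert j Z := erase_insert (by simp [hi, hij])
  rcases mnatConcave_iff_exchangeableAt.1 hf (insert i (insert j Z)) Z i (by simp [hi])
    with h | ⟨v, hv, -⟩
  · rwa [erase_i, add_comm (f (insert j Z))] at h
  · grind

lemma MnatConcave.localExchange₂ (hf : MnatConcave f) : LocalExchange₂ f := by
  intro Z i j k hi _ hk hij hik hjk
  have erase_i : (insert i (insert j Z)).erase i = insert j Z := erase_insert (by simp [hi, hij])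
  rcases mnatConcave_iff_exchangeableAt.1 hf (insert i (insert j Z)) (insert k Z) i
    (by simp [hi, hik]) with h | ⟨v, hv, h⟩
  · rw [erase_i, add_comm (f (insert j Z))] at h
    exact le_max_of_le_left h
  · obtain rfl : v = k := by grind
    have erase_v : (insert i (insert v Z)).erase v = insert i Z := by grind
    rw [erase_i, erase_v, insert_comm v j] at h
    exact le_max_of_le_right h

lemma MnatConcave.localExchange₃_or (hf : MnatConcave f) {Z : Finset α} {i j k l : α}
    (hi : i ∉ Z) (hk : k ∉ Z) (hl : l ∉ Z)
    (hij : i ≠ j) (hik : i ≠ k) (hil : i ≠ l) (hkl : k ≠ l) :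
    f (insert i (insert j Z)) + f (insert k (insert l Z)) ≤
      max (f (insert j Z) + f (insert i (insert k (insert l Z))))
        (max (f (insert i (insert k Z)) + f (insert j (insert l Z)))
          (f (insert j (insert k Z)) + f (insert i (insert l Z)))) := by
  have erase_i : (insert i (insert j Z)).erase i = insert j Z := erase_insert (by simp [hi, hij])
  rcases mnatConcave_iff_exchangeableAt.1 hf (insert i (insert j Z)) (insert k (insert l Z)) i
    (by simp [hi, hik, hil]) with h | ⟨v, hv, h⟩
  · rw [erase_i] at h
    exact le_max_of_le_left h
  · obtain rfl | rfl : v = k ∨ v = l := by grind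
    · have erase_v : (insert i (insert v (insert l Z))).erase v = insert i (insert l Z) := by grind
      rw [erase_i, erase_v, insert_comm v j] at h
      exact le_max_of_le_right (le_max_of_le_right h)
    · have erase_v : (insert i (insert k (insert v Z))).erase v = insert i (insert k Z) := by grind
      rw [erase_i, erase_v, insert_comm v j, add_comm (f (insert j (insert v Z)))] at h
      exact le_max_of_le_right (le_max_of_le_left h)

end MnatConcave

section Order

variable [AddCommMonoid Γ] [LinearOrder Γ] [IsOrderedCancelAddMonoid Γ]

lemma le_of_le_max_of_le_max_of_add_le_add {s a b r : WithBot Γ} (ha : s ≤ max a r)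
    (hb : s ≤ max b r) (hab : a + b ≤ r + r) : s ≤ r := by
  by_contra! hrs
  have hsa : s ≤ a := (le_max_iff.1 ha).resolve_right hrs.not_ge
  have hsb : s ≤ b := (le_max_iff.1 hb).resolve_right hrs.not_ge
  refine lt_irrefl (s + s) ?_
  calc
    s + s ≤ a + b := add_le_add hsa hsb
    _ ≤ r + r := hab
    _ ≤ s + r := by gcongr
    _ < s + s := WithBot.add_lt_add_left hrs.ne_bot hrs

end Order

lemma MnatConcave.localExchange₃ [DecidableEq α] {f : Finset α → WithBot ℝ}
    (hf : MnatConcave f) : LocalExchange₃ f := by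
  intro Z i j k l hi hj hk hl hij hik hil hjk hjl hkl
  have swap_i := hf.localExchange₃_or hi hk hl hij hik hil hkl
  have swap_j := hf.localExchange₃_or hj hk hl hij.symm hjk hjl hkl
  rw [insert_comm j i Z, max_comm (f (insert j (insert k Z)) + _)] at swap_j
  have submod {x : α} (hxk : x ≠ k) (hxl : x ≠ l) :
      f (insert x (insert k (insert l Z))) + f (insert x Z) ≤
        f (insert x (insert k Z)) + f (insert x (insert l Z)) := by
    have h := hf.localExchange₁ (insert x Z) k l (by grind) (by grind) hkl
    rwa [insert_comm l x, insert_comm k x, insert_comm k x] at h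
  refine le_of_le_max_of_le_max_of_add_le_add swap_i swap_j ?_
  calc
    _ = (f (insert i (insert k (insert l Z))) + f (insert i Z)) +
          (f (insert j (insert k (insert l Z))) + f (insert j Z)) := by abel
    _ ≤ (f (insert i (insert k Z)) + f (insert i (insert l Z))) +
          (f (insert j (insert k Z)) + f (insert j (insert l Z))) :=
      add_le_add (submod hik hil) (submod hjk hjl)
    _ = (f (insert i (insert k Z)) + f (insert j (insert l Z))) +
          (f (insert j (insert k Z)) + f (insert i (insert l Z))) := by abel
    _ ≤ _ := add_le_add (le_max_left _ _) (le_max_right _ _)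

section ValuatedMatroid

variable [DecidableEq α]

lemma insert_erase_eq_of_sdiff_eq_singleton {X Y : Finset α} {u v : α} (hu : X \ Y = {u})
    (hv : Y \ X = {v}) : insert v (X.erase u) = Y := by
  rw [erase_eq, ← hu, insert_eq, ← hv]
  ext
  simp only [mem_union, mem_sdiff]
  tauto

variable [AddCommMonoid Γ] [LinearOrder Γ]

lemma exchangeableAt_of_sdiff_eq_singleton (g : Finset α → WithBot Γ) {X Y : Finset α} {u v : α}
    (hu : X \ Y = {u}) (hv : Y \ X = {v}) : ExchangeableAt g X Y u := by
  have huv : u ≠ v := by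
    have : u ∈ X \ Y := by simp [hu]
    have : v ∈ Y \ X := by simp [hv]
    grind
  refine ⟨v, by simp [hv], ?_⟩
  rw [insert_erase_eq_of_sdiff_eq_singleton hu hv, erase_insert_of_ne huv,
    insert_erase_eq_of_sdiff_eq_singleton hv hu, add_comm]

lemma LocalExchange₃.add_le_max_erase {g : Finset α → WithBot Γ} (hg : LocalExchange₃ g)
    {Y : Finset α} {u u₀ v v₀ : α} (hu : u ∉ Y) (hu₀ : u₀ ∉ Y) (hne : u₀ ≠ u)
    (hv : v ∈ Y) (hv₀ : v₀ ∈ Y) (hvv : v ≠ v₀) :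
    g ((insert u ((insert u₀ Y).erase v₀)).erase v) + g Y ≤
      max (g ((insert u₀ Y).erase v₀) + g ((insert u Y).erase v))
        (g ((insert u₀ Y).erase v) + g ((insert u Y).erase v₀)) := by
  obtain ⟨Z, hvZ, hv₀Z, rfl⟩ : ∃ Z, v ∉ Z ∧ v₀ ∉ Z ∧ insert v (insert v₀ Z) = Y :=
    ⟨(Y.erase v).erase v₀, by simp, by simp, by grind⟩
  simp only [mem_insert, not_or] at hu hu₀
  have erase_v {x : α} (hx : x ≠ v) :
      (insert x (insert v (insert v₀ Z))).erase v = insert x (insert v₀ Z) := by grind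
  have erase_v₀ {x : α} (hx : x ≠ v₀) :
      (insert x (insert v (insert v₀ Z))).erase v₀ = insert x (insert v Z) := by grind
  have erase_both : (insert u (insert u₀ (insert v Z))).erase v = insert u (insert u₀ Z) := by grind
  rw [erase_v₀ hu₀.2.1, erase_both, erase_v hu.1, erase_v hu₀.1, erase_v₀ hu.2.1]
  have h := hg Z u u₀ v v₀ hu.2.2 hu₀.2.2 hvZ hv₀Z hne.symm hu.1 hu.2.1 hu₀.1 hu₀.2.1 hvv
  rwa [max_comm, add_comm (g (insert u (insert v Z)))] at h

variable [IsOrderedCancelAddMonoid Γ]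

lemma LocalExchange₃.exists_exchangeableAt_of_exchangeableAt {g : Finset α → WithBot Γ}
    (hg : LocalExchange₃ g) (hdom : BasisExchange (effDom g)) {X Y : Finset α}
    (hX : X ∈ effDom g) (hY : Y ∈ effDom g) {u u₀ : α} (hu : u ∉ Y) (hu₀ : u₀ ∈ X \ Y)
    (hne : u₀ ≠ u) :
    ∃ v₀ ∈ Y \ X, (insert u₀ Y).erase v₀ ∈ effDom g ∧
      (ExchangeableAt g X ((insert u₀ Y).erase v₀) u → ExchangeableAt g X Y u) := by
  obtain ⟨v₁, hv₁, hv₁_dom⟩ := hdom X hX Y hY u₀ hu₀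
  obtain ⟨v₀, hv₀, hmax⟩ := exists_max_image {v ∈ Y \ X | g ((insert u₀ Y).erase v) ≠ ⊥}
    (fun v => g ((insert u₀ Y).erase v) + g (insert v (X.erase u)))
    ⟨v₁, mem_filter.2 ⟨hv₁, hv₁_dom⟩⟩
  obtain ⟨hv₀, hv₀_dom⟩ := mem_filter.1 hv₀
  refine ⟨v₀, hv₀, hv₀_dom, ?_⟩
  rintro ⟨v, hv, hle⟩
  obtain ⟨hv, hvv₀⟩ : v ∈ Y \ X ∧ v ≠ v₀ := by grind
  have le_v₀ : g ((insert u₀ Y).erase v) + g (insert v (X.erase u)) ≤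
      g ((insert u₀ Y).erase v₀) + g (insert v₀ (X.erase u)) := by
    by_cases hv_dom : g ((insert u₀ Y).erase v) = ⊥
    · simp [hv_dom]
    · exact hmax v (mem_filter.2 ⟨hv, hv_dom⟩)
  have total : g X + g Y + g ((insert u₀ Y).erase v₀) ≤ g (insert v (X.erase u)) +
      (g ((insert u ((insert u₀ Y).erase v₀)).erase v) + g Y) := by
    rw [add_right_comm, ← add_assoc]
    gcongr
  rcases le_max_iff.1 (hg.add_le_max_erase hu (mem_sdiff.1 hu₀).2 hne (mem_sdiff.1 hv).1
    (mem_sdiff.1 hv₀).1 hvv₀) with h | h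
  · refine ⟨v, hv, WithBot.le_of_add_le_add_right hv₀_dom ?_⟩
    calc
      _ ≤ _ := total
      _ ≤ g (insert v (X.erase u)) +
            (g ((insert u₀ Y).erase v₀) + g ((insert u Y).erase v)) := by gcongr
      _ = _ := by abel
  · refine ⟨v₀, hv₀, WithBot.le_of_add_le_add_right hv₀_dom ?_⟩
    calc
      _ ≤ _ := total
      _ ≤ g (insert v (X.erase u)) +
            (g ((insert u₀ Y).erase v) + g ((insert u Y).erase v₀)) := by gcongr
      _ = (g ((insert u₀ Y).erase v) + g (insert v (X.erase u))) +
            g ((insert u Y).erase v₀) := by abel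
      _ ≤ (g ((insert u₀ Y).erase v₀) + g (insert v₀ (X.erase u))) +
            g ((insert u Y).erase v₀) := by gcongr
      _ = _ := by abel

theorem LocalExchange₃.exchangeableAt {g : Finset α → WithBot Γ} (hg : LocalExchange₃ g) {n : ℕ}
    (hsized : (effDom g).Sized n) (hdom : BasisExchange (effDom g)) {X Y : Finset α}
    (hX : X ∈ effDom g) (hY : Y ∈ effDom g) {u : α} (hu : u ∈ X \ Y) : ExchangeableAt g X Y u := by
  induction hm : #(Y \ X) using Nat.strong_induction_on generalizing Y with
  | _ m ih =>
    obtain ⟨huX, huY⟩ := mem_sdiff.1 hu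
    by_cases hex : ∃ u₀ ∈ X \ Y, u₀ ≠ u
    · obtain ⟨u₀, hu₀, hne⟩ := hex
      obtain ⟨v₀, hv₀, hY', himp⟩ :=
        hg.exists_exchangeableAt_of_exchangeableAt hdom hX hY huY hu₀ hne
      have sdiff_eq : (insert u₀ Y).erase v₀ \ X = (Y \ X).erase v₀ := by grind
      refine himp (ih _ ?_ hY' (by grind) rfl)
      rw [sdiff_eq, ← hm]
      exact card_erase_lt_of_mem hv₀
    · push Not at hex
      have hXY : X \ Y = {u} := eq_singleton_iff_unique_mem.2 ⟨hu, hex⟩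
      obtain ⟨v, hYX⟩ : ∃ v, Y \ X = {v} := by
        rw [← card_eq_one, card_sdiff_comm ((hsized hY).trans (hsized hX).symm), hXY,
          card_singleton]
      exact exchangeableAt_of_sdiff_eq_singleton g hXY hYX

end ValuatedMatroid

section Layer

lemma mem_effDom_layer {n : ℕ} {g : Finset α → WithBot Γ} {S : Finset α} :
    S ∈ effDom (layer n g) ↔ #S = n ∧ S ∈ effDom g := by
  simp [effDom, layer]

lemma layer_le [LinearOrder Γ] (n : ℕ) (g : Finset α → WithBot Γ) (S : Finset α) :
    layer n g S ≤ g S := by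
  unfold layer
  split_ifs <;> simp

lemma LocalExchange₃.layer [DecidableEq α] [Add Γ] [LinearOrder Γ] {g : Finset α → WithBot Γ}
    (hg : LocalExchange₃ g) (n : ℕ) : LocalExchange₃ (layer n g) := by
  intro Z i j k l hi hj hk hl hij hik hil hjk hjl hkl
  have card_insert₂ {a b : α} (ha : a ∉ Z) (hb : b ∉ Z) (hab : a ≠ b) :
      #(insert a (insert b Z)) = #Z + 2 := by
    rw [card_insert_of_notMem (by simp [ha, hab]), card_insert_of_notMem hb]
  simp only [_root_.layer, card_insert₂, hi, hj, hk, hl, hij, hik, hil, hjk, hjl, hkl, ne_eq,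
    not_false_eq_true]
  split_ifs
  · exact hg Z i j k l hi hj hk hl hij hik hil hjk hjl hkl
  · simp

end Layer

section Dummies

variable [DecidableEq α] [DecidableEq β]

lemma toLeft_erase_inl (S : Finset (α ⊕ β)) (a : α) :
    (S.erase (Sum.inl a)).toLeft = S.toLeft.erase a := by
  ext; simp

lemma toLeft_erase_inr (S : Finset (α ⊕ β)) (b : β) :
    (S.erase (Sum.inr b)).toLeft = S.toLeft := by
  ext; simp

lemma LocalExchange₃.comp_toLeft [AddCommMonoid Γ] [LinearOrder Γ] {f : Finset α → WithBot Γ}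
    (h₁ : LocalExchange₁ f) (h₂ : LocalExchange₂ f) (h₃ : LocalExchange₃ f) :
    LocalExchange₃ fun S : Finset (α ⊕ β) => f S.toLeft := by
  intro W a b c d ha hb hc hd hab hac had hbc hbd hcd
  rcases a with a | a <;> rcases b with b | b <;> rcases c with c | c <;> rcases d with d | d
  all_goals
    simp only [toLeft_insert_inl, toLeft_insert_inr, ne_eq, Sum.inl.injEq, ← mem_toLeft] at *
  case inl.inl.inl.inl => exact h₃ _ a b c d ha hb hc hd hab hac had hbc hbd hcd
  case inl.inl.inl.inr => exact h₂ _ a b c ha hb hc hab hac hbc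
  case inl.inl.inr.inl =>
    simpa only [max_comm, add_comm] using h₂ _ a b d ha hb hd hab had hbd
  case inl.inr.inl.inl =>
    simpa only [max_comm, add_comm, insert_comm] using
      h₂ _ c d a hc hd ha hcd (Ne.symm hac) (Ne.symm had)
  case inr.inl.inl.inl =>
    simpa only [max_comm, add_comm, insert_comm] using
      h₂ _ c d b hc hd hb hcd (Ne.symm hbc) (Ne.symm hbd)
  case inl.inl.inr.inr => exact le_max_of_le_left (h₁ _ a b ha hb hab)
  case inr.inr.inl.inl =>
    exact le_max_of_le_left ((add_comm _ _).trans_le (h₁ _ c d hc hd hcd))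
  -- With a dummy on both sides, the left-hand side agrees with a term on the right.
  all_goals simp [add_comm]

end Dummies

section MnatFamily

variable [DecidableEq α] {F : Set (Finset α)}

lemma MnatFamily.exists_erase_mem (hF : MnatFamily F) {X Y : Finset α} (hX : X ∈ F) (hY : Y ∈ F)
    (hcard : #X < #Y) : ∃ v ∈ Y \ X, Y.erase v ∈ F := by
  induction hm : #(X \ Y) using Nat.strong_induction_on generalizing X with
  | _ m ih =>
    obtain ⟨v, hvY, hvX⟩ := exists_mem_notMem_of_card_lt_card hcard
    have hv : v ∈ Y \ X := mem_sdiff.2 ⟨hvY, hvX⟩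
    rcases hF Y hY X hX v hv with ⟨h, -⟩ | ⟨j, hj, -, hX'⟩
    · exact ⟨v, hv, h⟩
    · obtain ⟨hjX, hjY⟩ := mem_sdiff.1 hj
      have card_eq : #((insert v X).erase j) = #X := by
        rw [card_erase_of_mem (mem_insert_of_mem hjX), card_insert_of_notMem hvX,
          Nat.add_sub_cancel]
      have sdiff_eq : (insert v X).erase j \ Y = (X \ Y).erase j := by
        rw [erase_sdiff_comm, insert_sdiff_of_mem _ hvY]
      obtain ⟨w, hw, hwF⟩ := ih _ (by rw [sdiff_eq, ← hm]; exact card_erase_lt_of_mem hj) hX'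
        (by rwa [card_eq]) rfl
      exact ⟨w, by grind, hwF⟩

lemma MnatFamily.exists_erase_toLeft_mem [DecidableEq β] (hF : MnatFamily F)
    {S T : Finset (α ⊕ β)} (hS : S.toLeft ∈ F) (hT : T.toLeft ∈ F) (hcard : #S < #T) :
    ∃ v ∈ T \ S, (T.erase v).toLeft ∈ F := by
  by_cases hright : T.toRight ⊆ S.toRight
  · have card_left : #S.toLeft < #T.toLeft := by
      have := card_le_card hright
      have := S.card_toLeft_add_card_toRight
      have := T.card_toLeft_add_card_toRight
      omega
    obtain ⟨v, hv, hvF⟩ := hF.exists_erase_mem hS hT card_left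
    exact ⟨Sum.inl v, by simpa using hv, by rwa [toLeft_erase_inl]⟩
  · obtain ⟨d, hdT, hdS⟩ := not_subset.1 hright
    exact ⟨Sum.inr d, by simp_all, by rwa [toLeft_erase_inr]⟩

lemma MnatFamily.basisExchange_toLeft [DecidableEq β] (hF : MnatFamily F) (n : ℕ) :
    BasisExchange {S : Finset (α ⊕ β) | #S = n ∧ S.toLeft ∈ F} := by
  rintro S ⟨hSn, hS⟩ T ⟨hTn, hT⟩ u hu
  obtain ⟨huS, huT⟩ := mem_sdiff.1 hu
  suffices ∃ v ∈ T \ S, ((insert u T).erase v).toLeft ∈ F by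
    obtain ⟨v, hv, hvF⟩ := this
    refine ⟨v, hv, ?_, hvF⟩
    rw [card_erase_of_mem (mem_insert_of_mem (mem_sdiff.1 hv).1), card_insert_of_notMem huT,
      Nat.add_sub_cancel, hTn]
  have of_insert (h : (insert u T).toLeft ∈ F) :
      ∃ v ∈ T \ S, ((insert u T).erase v).toLeft ∈ F := by
    obtain ⟨v, hv, hvF⟩ := hF.exists_erase_toLeft_mem hS h
      (by rw [card_insert_of_notMem huT, hSn, hTn]; exact n.lt_succ_self)
    exact ⟨v, by grind, hvF⟩
  rcases u with i | e
  · rcases hF _ hS _ hT i (by simpa using hu) with ⟨-, h⟩ | ⟨j, hj, -, h⟩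
    · exact of_insert (by rwa [toLeft_insert_inl])
    · exact ⟨Sum.inl j, by simpa using hj, by rwa [toLeft_erase_inl, toLeft_insert_inl]⟩
  · exact of_insert (by rwa [toLeft_insert_inr])

end MnatFamily

lemma exchangeableAt_layer_toLeft [DecidableEq α] [DecidableEq β] [AddCommMonoid Γ] [LinearOrder Γ]
    [IsOrderedCancelAddMonoid Γ] {f : Finset α → WithBot Γ} (hF : MnatFamily (effDom f))
    (h₁ : LocalExchange₁ f) (h₂ : LocalExchange₂ f) (h₃ : LocalExchange₃ f)
    {S T : Finset (α ⊕ β)} (hcard : #S = #T) (hS : f S.toLeft ≠ ⊥) (hT : f T.toLeft ≠ ⊥)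
    {u : α ⊕ β} (hu : u ∈ S \ T) :
    ExchangeableAt (layer #T fun S => f S.toLeft) S T u := by
  have mem_effDom {S : Finset (α ⊕ β)} :
      S ∈ effDom (layer #T fun S => f S.toLeft) ↔ #S = #T ∧ S.toLeft ∈ effDom f :=
    mem_effDom_layer
  have dom_eq : effDom (layer #T fun S : Finset (α ⊕ β) => f S.toLeft) =
      {S | #S = #T ∧ S.toLeft ∈ effDom f} := Set.ext fun _ => mem_effDom
  refine ((LocalExchange₃.comp_toLeft h₁ h₂ h₃).layer #T).exchangeableAt
    (fun S hS => (mem_effDom.1 hS).1) ?_ (mem_effDom.2 ⟨hcard, hS⟩) (mem_effDom.2 ⟨rfl, hT⟩) hu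
  rw [dom_eq]
  exact hF.basisExchange_toLeft #T

lemma ExchangeableAt.of_layer_toLeft [DecidableEq α] [DecidableEq β] [AddCommMonoid Γ]
    [LinearOrder Γ] [IsOrderedAddMonoid Γ] {f : Finset α → WithBot Γ}
    {n : ℕ} {S T : Finset (α ⊕ β)} (hS : #S = n) (hT : #T = n) {i : α}
    (h : ExchangeableAt (layer n fun S => f S.toLeft) S T (Sum.inl i)) :
    f S.toLeft + f T.toLeft ≤ f (S.toLeft.erase i) + f (insert i T.toLeft) ∨
      ExchangeableAt f S.toLeft T.toLeft i := by
  obtain ⟨v, hv, hle⟩ := h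
  replace hle := hle.trans (add_le_add (layer_le _ _ _) (layer_le _ _ _))
  simp only [layer, hS, hT, if_true] at hle
  rcases v with j | d
  · refine .inr ⟨j, by simpa using hv, ?_⟩
    simpa only [toLeft_insert_inl, toLeft_erase_inl] using hle
  · refine .inl ?_
    simpa only [toLeft_insert_inl, toLeft_insert_inr, toLeft_erase_inl, toLeft_erase_inr] using hle

theorem mnatConcave_of_localExchange [DecidableEq α] {f : Finset α → WithBot ℝ}
    (hF : MnatFamily (effDom f)) (h₁ : LocalExchange₁ f) (h₂ : LocalExchange₂ f)
    (h₃ : LocalExchange₃ f) : MnatConcave f := by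
  refine mnatConcave_iff_exchangeableAt.2 fun X Y i hi => ?_
  by_cases hX : f X = ⊥
  · simp [hX]
  by_cases hY : f Y = ⊥
  · simp [hY]
  let S : Finset (α ⊕ ℕ) := X.disjSum (range #Y)
  let T : Finset (α ⊕ ℕ) := Y.disjSum (range #X)
  have hS : #S = #T := by simp [S, T, add_comm]
  have hST := exchangeableAt_layer_toLeft (S := S) (T := T) hF h₁ h₂ h₃ hS (by simpa [S])
    (by simpa [T]) (u := Sum.inl i) (by simpa [S, T] using hi)
  simpa [S, T] using hST.of_layer_toLeft hS rfl

end LocalExchange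

theorem stmt_5_general {α : Type*} [DecidableEq α] (f : Finset α → WithBot ℝ) :
    MnatConcave f ↔
      MnatFamily (effDom f) ∧ LocalExchange₁ f ∧ LocalExchange₂ f ∧ LocalExchange₃ f :=
  ⟨fun hf => ⟨hf.mnatFamily_effDom, hf.localExchange₁, hf.localExchange₂, hf.localExchange₃⟩,
    fun ⟨hF, h₁, h₂, h₃⟩ => mnatConcave_of_localExchange hF h₁ h₂ h₃⟩

theorem stmt_5 {α : Type*} [Fintype α] [DecidableEq α] (f : Finset α → WithBot ℝ)
    (hne : ∃ X, f X ≠ ⊥) :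
    MnatConcave f ↔
      (MnatFamily {X : Finset α | f X ≠ ⊥} ∧
       (∀ Z : Finset α, ∀ i j : α, i ∉ Z → j ∉ Z → i ≠ j →
          f (insert i (insert j Z)) + f Z ≤ f (insert i Z) + f (insert j Z)) ∧
       (∀ Z : Finset α, ∀ i j k : α, i ∉ Z → j ∉ Z → k ∉ Z →
          i ≠ j → i ≠ k → j ≠ k →
          f (insert i (insert j Z)) + f (insert k Z) ≤
            max (f (insert i (insert k Z)) + f (insert j Z))
              (f (insert j (insert k Z)) + f (insert i Z))) ∧
       (∀ Z : Finset α, ∀ i j k l : α, i ∉ Z → j ∉ Z → k ∉ Z → l ∉ Z →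
          i ≠ j → i ≠ k → i ≠ l → j ≠ k → j ≠ l → k ≠ l →
          f (insert i (insert j Z)) + f (insert k (insert l Z)) ≤
            max (f (insert i (insert k Z)) + f (insert j (insert l Z)))
              (f (insert j (insert k Z)) + f (insert i (insert l Z))))) :=
  stmt_5_general f
end

section
/- Every M♮-concave set function f : 2^N → ℝ ∪ {-∞} has the strong multiple exchange property: for any X, Y ⊆ N and any I ⊆ X \ Y, there exists J ⊆ Y \ X with |J| ≤ |I| such that f(X) + f(Y) ≤ f((X \ I) ∪ J) + f((Y \ J) ∪ I). -/
/-!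
Writing the exchanged sets as `(X \ I) ∪ K₁` and `((X ∩ Y) ∪ I) ∪ K₂`, the theorem asks for an
allocation of the goods `Y \ X` to two agents, with `#K₁ ≤ #I`, of welfare at least `f X + f Y`.
At any prices, exchanging the elements of `I` one at a time gives bundles `K₁`, `K₂` whose net
values together with the total price of `Y \ X` reach `f X + f Y`. M♮-concave valuations satisfy
the gross substitutes condition, also after the cardinality restriction on `K₁`, so the ascending
auction of Kelso and Crawford ends in an approximate equilibrium; at its prices the bundles just
found can be compared with the equilibrium allocation, which therefore has almost the required
welfare. Since there are finitely many allocations, one of them attains it. The value `-∞` is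
removed beforehand by an exact penalty.
-/

section

open Finset
open scoped symmDiff

variable {α : Type*}

/-- The value of a bundle of goods net of its price. -/
def netValue (v : Finset α → ℝ) (p : α → ℝ) (A : Finset α) : ℝ :=
  v A - ∑ e ∈ A, p e

/-- `A` belongs to the demand set at prices `p` of an agent with valuation `v` who can only
consume the bundles in `F`. -/
def IsDemand (F : Set (Finset α)) (v : Finset α → ℝ) (p : α → ℝ) (A : Finset α) : Prop :=
  A ∈ F ∧ ∀ B ∈ F, netValue v p B ≤ netValue v p A

section Exchange

variable [DecidableEq α]

/-- M♮-concavity of a set function with effective domain `F`: the exchange property holds between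
members of `F`, and the exchanged sets stay in `F`. The values of `f` outside `F` are ignored. -/
def MnatConcaveOn (F : Set (Finset α)) (f : Finset α → ℝ) : Prop :=
  ∀ ⦃X⦄, X ∈ F → ∀ ⦃Y⦄, Y ∈ F → ∀ ⦃i⦄, i ∈ X \ Y →
    (X.erase i ∈ F ∧ insert i Y ∈ F ∧ f X + f Y ≤ f (X.erase i) + f (insert i Y)) ∨
    ∃ j ∈ Y \ X, insert j (X.erase i) ∈ F ∧ (insert i Y).erase j ∈ F ∧
      f X + f Y ≤ f (insert j (X.erase i)) + f ((insert i Y).erase j)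

/-- The diminishing returns form of submodularity. -/
def DiminishingReturns (f : Finset α → ℝ) : Prop :=
  ∀ ⦃S T⦄, S ⊆ T → ∀ ⦃e⦄, e ∉ T → f (insert e T) + f S ≤ f T + f (insert e S)

namespace DiminishingReturns

variable {f : Finset α → ℝ}

theorem apply_union_sub_le_sum (hf : DiminishingReturns f) {X J : Finset α} (hXJ : Disjoint X J) :
    f (X ∪ J) - f X ≤ ∑ j ∈ J, (f (insert j X) - f X) := by
  induction J using Finset.induction_on with
  | empty => simp
  | insert a J ha ih =>
    obtain ⟨haX, hXJ⟩ := Finset.disjoint_insert_right.1 hXJ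
    have hmarginal := hf (S := X) (T := X ∪ J) subset_union_left (e := a) (by simp [haX, ha])
    rw [sum_insert ha, union_insert]
    linarith [ih hXJ]

theorem sum_le_sub_apply_sdiff (hf : DiminishingReturns f) {Y D : Finset α} (hDY : D ⊆ Y) :
    ∑ j ∈ D, (f Y - f (Y.erase j)) ≤ f Y - f (Y \ D) := by
  induction D using Finset.induction_on with
  | empty => simp
  | insert a D ha ih =>
    obtain ⟨haY, hDY⟩ := insert_subset_iff.1 hDY
    have hmarginal := hf (S := Y \ insert a D) (T := Y.erase a) (by grind) (notMem_erase a Y)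
    rw [insert_erase haY, show insert a (Y \ insert a D) = Y \ D by grind] at hmarginal
    rw [sum_insert ha]
    linarith [ih hDY]

end DiminishingReturns

namespace MnatConcaveOn

variable {F : Set (Finset α)} {f v : Finset α → ℝ} {p p' : α → ℝ}

theorem inter_Iic (hf : MnatConcaveOn F f) (S : Finset α) : MnatConcaveOn (F ∩ Set.Iic S) f := by
  rintro X ⟨hXF, hXS : X ⊆ S⟩ Y ⟨hYF, hYS : Y ⊆ S⟩ i hi
  have hiS : insert i Y ⊆ S := by grind
  have hXi : X.erase i ⊆ S := (erase_subset i X).trans hXS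
  obtain ⟨hX', hY', h⟩ | ⟨j, hj, hX', hY', h⟩ := hf hXF hYF hi
  · exact .inl ⟨⟨hX', hXi⟩, ⟨hY', hiS⟩, h⟩
  · exact .inr ⟨j, hj, ⟨hX', insert_subset (hYS (mem_sdiff.1 hj).1) hXi⟩,
      ⟨hY', (erase_subset j _).trans hiS⟩, h⟩

theorem diminishingReturns (hf : MnatConcaveOn Set.univ f) : DiminishingReturns f := by
  intro S T hST e he
  obtain ⟨-, -, h⟩ | ⟨j, hj, -⟩ :=
    hf (X := insert e T) trivial (Y := S) trivial (i := e) (by grind)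
  · rwa [erase_insert he] at h
  · grind

theorem netValue_exchange (hv : MnatConcaveOn F v) (hp : p ≤ p') {A B : Finset α} (hA : A ∈ F)
    (hB : B ∈ F) {i : α} (hi : i ∈ A \ B) (hpi : p' i = p i) :
    (A.erase i ∈ F ∧ insert i B ∈ F ∧
      netValue v p A + netValue v p' B ≤
        netValue v p (A.erase i) + netValue v p' (insert i B)) ∨
    ∃ j ∈ B \ A, insert j (A.erase i) ∈ F ∧ (insert i B).erase j ∈ F ∧
      netValue v p A + netValue v p' B ≤
        netValue v p (insert j (A.erase i)) + netValue v p' ((insert i B).erase j) := by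
  obtain ⟨hiA, hiB⟩ := mem_sdiff.1 hi
  have hsumA := add_sum_erase A p hiA
  have hsumB := sum_insert (f := p') hiB
  obtain ⟨hA', hB', h⟩ | ⟨j, hj, hA', hB', h⟩ := hv hA hB hi
  · refine .inl ⟨hA', hB', ?_⟩
    unfold netValue
    linarith
  · refine .inr ⟨j, hj, hA', hB', ?_⟩
    have hsumA' := sum_insert (f := p) (s := A.erase i) (a := j) (by grind)
    have hsumB' := add_sum_erase (insert i B) p' (a := j) (by grind)
    unfold netValue
    linarith [hp j]

protected theorem netValue (hv : MnatConcaveOn F v) (p : α → ℝ) : MnatConcaveOn F (netValue v p) :=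
  fun _ hA _ hB _ hi => hv.netValue_exchange le_rfl hA hB hi rfl

/- The elements of `I` leave `X` one at a time, each in an exchange with a set `W ∪ I₀ ∪ K` for
which `K ⊆ E` is optimal, `I₀` being the part of `I` already moved; these values telescope. -/
theorem exists_exchange_of_disjoint (hf : MnatConcaveOn Set.univ f) {X W E I C : Finset α}
    (hWX : W ⊆ X) (hIX : I ⊆ X) (hIW : Disjoint I W) (hIE : Disjoint I E) (hCE : C ⊆ E) :
    ∃ K₁ ⊆ E, ∃ K₂ ⊆ E, #K₁ ≤ #I ∧
      f X + f (W ∪ C) ≤ f (X \ I ∪ K₁) + f (W ∪ I ∪ K₂) := by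
  induction I using Finset.induction_on generalizing X with
  | empty => exact ⟨∅, empty_subset E, C, hCE, by simp⟩
  | insert i I hi ih =>
    obtain ⟨hiX, hIX⟩ := insert_subset_iff.1 hIX
    obtain ⟨hiW, hIW⟩ := disjoint_insert_left.1 hIW
    obtain ⟨hiE, hIE⟩ := disjoint_insert_left.1 hIE
    obtain ⟨K, hK, hKmax⟩ := exists_max_image E.powerset (fun K => f (W ∪ I ∪ K)) ⟨∅, by simp⟩
    simp only [mem_powerset] at hK hKmax
    obtain ⟨-, -, h⟩ | ⟨j, hj, -, -, h⟩ :=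
      hf (X := X) trivial (Y := W ∪ I ∪ K) trivial (i := i) (by grind)
    · obtain ⟨K₁, hK₁, K₂, hK₂, hcard, hih⟩ := ih (X := X.erase i) (by grind) (by grind) hIW hIE
      refine ⟨K₁, hK₁, K, hK, hcard.trans (card_le_card (subset_insert i I)), ?_⟩
      rw [erase_sdiff_comm, ← sdiff_insert] at hih
      rw [union_insert, insert_union]
      linarith [hKmax K₂ hK₂]
    · obtain ⟨hjY, hjX⟩ := mem_sdiff.1 hj
      have hji : j ≠ i := fun hji => hjX (hji ▸ hiX)
      have hjWI : j ∉ W ∪ I := fun hj => hjX (union_subset hWX hIX hj)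
      have hjK : j ∈ K := (mem_union.1 hjY).resolve_left hjWI
      have hjI : j ∉ I := fun hj => hjWI (mem_union_right W hj)
      obtain ⟨K₁, hK₁, K₂, hK₂, hcard, hih⟩ :=
        ih (X := insert j (X.erase i)) (by grind) (by grind) hIW hIE
      refine ⟨insert j K₁, insert_subset (hK hjK) hK₁, K.erase j,
        (erase_subset j K).trans hK, ?_, ?_⟩
      · rw [card_insert_of_notMem hi]
        exact (card_insert_le j K₁).trans (Nat.succ_le_succ hcard)
      · rw [insert_sdiff_of_notMem _ hjI, erase_sdiff_comm, ← sdiff_insert, insert_union,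
          ← union_insert] at hih
        rw [erase_insert_of_ne hji.symm, erase_union_distrib, erase_eq_of_notMem hjWI,
          ← insert_union, ← union_insert] at h
        linarith [hKmax K₂ hK₂]

/- At the prices `f (insert j X) - f X`, no set of goods added to `X` makes a profit, so exchanging
all of `X \ Y` out of `X` takes `Y` to a set `B` of at least the same net value. -/
theorem exists_card_le_apply_sub_le_sum (hf : MnatConcaveOn Set.univ f) (X Y : Finset α) :
    ∃ B, X ∩ Y ⊆ B ∧ B ⊆ Y ∧ #B ≤ #X ∧ f Y - f B ≤ ∑ j ∈ Y \ B, (f (insert j X) - f X) := by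
  set p : α → ℝ := fun j => f (insert j X) - f X
  obtain ⟨K₁, hK₁, K₂, hK₂, hcard, hexchange⟩ :=
    (hf.netValue p).exists_exchange_of_disjoint inter_subset_left sdiff_subset
      (disjoint_sdiff_inter X Y) disjoint_sdiff_sdiff (Subset.refl (Y \ X))
  have hB : X ∩ Y ∪ K₁ ⊆ Y := union_subset inter_subset_right (hK₁.trans sdiff_subset)
  refine ⟨X ∩ Y ∪ K₁, subset_union_left, hB, ?_, ?_⟩
  · rw [← card_inter_add_card_sdiff X Y]
    exact (card_union_le _ _).trans (Nat.add_le_add_left hcard _)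
  · have hXK₂ : Disjoint X K₂ := disjoint_sdiff.mono_right hK₂
    have hX := hf.diminishingReturns.apply_union_sub_le_sum hXK₂
    have hXY : X ∩ Y ∪ X \ Y = X := sup_inf_sdiff X Y
    have hYX : X ∩ Y ∪ Y \ X = Y := inter_comm X Y ▸ sup_inf_sdiff Y X
    rw [sdiff_sdiff_self_left, hXY, hYX] at hexchange
    simp only [netValue, sum_union hXK₂] at hexchange
    linarith [sum_sdiff (f := p) hB]

/- If no swap works, then every `j ∈ Y \ X` has a smaller marginal value at `X.erase i` than at
`insert i Y`. This contradicts the previous lemma, as `insert i Y \ B` has two elements. -/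
theorem exists_swap (hf : MnatConcaveOn Set.univ f) {X Y : Finset α} (hXY : #X ≤ #Y) {i : α}
    (hi : i ∈ X \ Y) :
    ∃ j ∈ Y \ X, f X + f Y ≤ f (insert j (X.erase i)) + f ((insert i Y).erase j) := by
  obtain ⟨hiX, hiY⟩ := mem_sdiff.1 hi
  by_contra! hswap
  have htransfer : f X + f Y ≤ f (X.erase i) + f (insert i Y) := by
    obtain ⟨-, -, h⟩ | ⟨j, hj, -, -, h⟩ := hf (X := X) trivial (Y := Y) trivial hi
    exacts [h, absurd h (hswap j hj).not_ge]
  obtain ⟨B, hXYB, hBY, hcard, hB⟩ :=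
    hf.exists_card_le_apply_sub_le_sum (X.erase i) (insert i Y)
  have hmarginal := hf.diminishingReturns.sum_le_sub_apply_sdiff (D := insert i Y \ B) sdiff_subset
  rw [Finset.sdiff_sdiff_eq_self hBY] at hmarginal
  have hlt : ∀ j ∈ insert i Y \ B, j ≠ i →
      f (insert j (X.erase i)) - f (X.erase i) < f (insert i Y) - f ((insert i Y).erase j) := by
    intro j hj hji
    linarith [hswap j (by grind)]
  have hle : ∀ j ∈ insert i Y \ B,
      f (insert j (X.erase i)) - f (X.erase i) ≤ f (insert i Y) - f ((insert i Y).erase j) := by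
    intro j hj
    obtain rfl | hji := eq_or_ne j i
    · rw [insert_erase hiX, erase_insert hiY]
      linarith
    · exact (hlt j hj hji).le
  have htwo : 1 < #(insert i Y \ B) := by
    rw [card_sdiff_of_subset hBY, card_insert_of_notMem hiY]
    rw [card_erase_of_mem hiX] at hcard
    have := card_pos.2 ⟨i, hiX⟩
    omega
  obtain ⟨j, hj, hji⟩ := exists_mem_ne htwo i
  linarith [sum_lt_sum hle ⟨j, hj, hlt j hj hji⟩]

theorem truncation (hf : MnatConcaveOn Set.univ f) (k : ℕ) : MnatConcaveOn {X | #X ≤ k} f := by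
  intro X (hX : #X ≤ k) Y (hY : #Y ≤ k) i hi
  obtain ⟨hiX, hiY⟩ := mem_sdiff.1 hi
  have hcard : ∀ j ∈ Y \ X, #(insert j (X.erase i)) ≤ k ∧ #((insert i Y).erase j) ≤ k := by
    intro j hj
    obtain ⟨hjY, hjX⟩ := mem_sdiff.1 hj
    rw [card_insert_of_notMem (mt mem_of_mem_erase hjX), card_erase_add_one hiX,
      card_erase_of_mem (mem_insert_of_mem hjY), card_insert_of_notMem hiY]
    exact ⟨hX, hY⟩
  obtain hYk | hYk := Nat.lt_or_ge #Y k
  · obtain ⟨-, -, h⟩ | ⟨j, hj, -, -, h⟩ := hf (X := X) trivial (Y := Y) trivial hi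
    · exact .inl ⟨card_erase_le.trans hX, (card_insert_le i Y).trans hYk, h⟩
    · exact .inr ⟨j, hj, (hcard j hj).1, (hcard j hj).2, h⟩
  · obtain ⟨j, hj, h⟩ := hf.exists_swap (hX.trans hYk) hi
    exact .inr ⟨j, hj, (hcard j hj).1, (hcard j hj).2, h⟩

theorem contraction (hf : MnatConcaveOn F f) {B E : Finset α} (hBE : Disjoint B E) :
    MnatConcaveOn {J | J ⊆ E ∧ B ∪ J ∈ F} fun J => f (B ∪ J) := by
  rintro C ⟨hCE, hC⟩ D ⟨hDE, hD⟩ i hi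
  obtain ⟨hiC, hiD⟩ := mem_sdiff.1 hi
  have hiB : i ∉ B := disjoint_right.1 hBE (hCE hiC)
  have hCi : C.erase i ⊆ E := (erase_subset i C).trans hCE
  have hDi : insert i D ⊆ E := insert_subset (hCE hiC) hDE
  have herase {j : α} (hj : j ∉ B) (A : Finset α) : (B ∪ A).erase j = B ∪ A.erase j := by
    rw [erase_union_distrib, erase_eq_of_notMem hj]
  obtain ⟨hC', hD', h⟩ | ⟨j, hj, hC', hD', h⟩ :=
    hf hC hD (i := i) (by simp [hiB, hiC, hiD])
  · rw [herase hiB] at hC' h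
    rw [← union_insert] at hD' h
    exact .inl ⟨⟨hCi, hC'⟩, ⟨hDi, hD'⟩, h⟩
  · obtain ⟨hjB, hjD, hjC⟩ : j ∉ B ∧ j ∈ D ∧ j ∉ C := by grind
    rw [herase hiB, ← union_insert] at hC' h
    rw [← union_insert, herase hjB] at hD' h
    exact .inr ⟨j, mem_sdiff.2 ⟨hjD, hjC⟩, ⟨insert_subset (hDE hjD) hCi, hC'⟩,
      ⟨(erase_subset j _).trans hDi, hD'⟩, h⟩

/- Among the demanded bundles at the new prices, one with largest intersection with `A` works:
otherwise an exchange with `A` would produce a larger intersection. -/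
theorem exists_isDemand_of_le (hv : MnatConcaveOn F v) (hF : F.Finite) (hp : p ≤ p')
    {A : Finset α} (hA : IsDemand F v p A) :
    ∃ B, IsDemand F v p' B ∧ ∀ e ∈ A, p' e = p e → e ∈ B := by
  have hdemand : {B | IsDemand F v p' B}.Nonempty := by
    obtain ⟨B, hB, hBmax⟩ := F.exists_max_image (netValue v p') hF ⟨A, hA.1⟩
    exact ⟨B, hB, hBmax⟩
  obtain ⟨B, hB, hBmax⟩ := Set.exists_max_image {B | IsDemand F v p' B} (fun B => #(A ∩ B))
    (hF.subset fun B hB => hB.1) hdemand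
  refine ⟨B, hB, fun i hiA hpi => by_contra fun hiB => ?_⟩
  have hlt {B' : Finset α} (hB' : insert i (A ∩ B) ⊆ B') : #(A ∩ B) < #(A ∩ B') :=
    card_lt_card (by grind)
  obtain ⟨hA', hB', h⟩ | ⟨j, hj, hA', hB', h⟩ :=
    hv.netValue_exchange hp hA.1 hB.1 (mem_sdiff.2 ⟨hiA, hiB⟩) hpi
  · have hdem : IsDemand F v p' (insert i B) :=
      ⟨hB', fun C hC => by linarith [hA.2 _ hA', hB.2 C hC]⟩
    exact (hlt (by grind)).not_ge (hBmax _ hdem)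
  · have hdem : IsDemand F v p' ((insert i B).erase j) :=
      ⟨hB', fun C hC => by linarith [hA.2 _ hA', hB.2 C hC]⟩
    exact (hlt (by grind)).not_ge (hBmax _ hdem)

end MnatConcaveOn

theorem IsDemand.price_le {F : Set (Finset α)} {v : Finset α → ℝ} {p : α → ℝ} {D : Finset α}
    (hD : IsDemand F v p D) {e : α} (he : e ∈ D) (hDe : D.erase e ∈ F) :
    p e ≤ v D - v (D.erase e) := by
  have h := hD.2 _ hDe
  unfold netValue at h
  linarith [add_sum_erase D p he]

end Exchange

section Auction

variable {ι : Type*} [DecidableEq ι] {F : ι → Set (Finset α)} {v : ι → Finset α → ℝ}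
  {E : Finset α} {ε : ℝ} {q : α → ℝ} {a : α → ι}

/-- The prices faced by agent `i` in an ascending auction with current prices `q` and tentative
assignment `a`: the goods held by others cost an additional increment `ε`. -/
def askPrice (q : α → ℝ) (a : α → ι) (ε : ℝ) (i : ι) (e : α) : ℝ :=
  if a e = i then q e else q e + ε

/-- The invariant of the Kelso–Crawford auction of the goods in `E`: every agent can complete the
goods it holds to a demanded bundle at its asking prices. -/
def IsAuctionState (F : ι → Set (Finset α)) (v : ι → Finset α → ℝ) (E : Finset α) (ε : ℝ)
    (q : α → ℝ) (a : α → ι) : Prop :=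
  ∀ i, ∃ D, IsDemand (F i) (v i) (askPrice q a ε i) D ∧ {e ∈ E | a e = i} ⊆ D

/-- The final states of the Kelso–Crawford auction: every agent demands exactly the goods it holds
at its asking prices. -/
def IsAuctionEquilibrium (F : ι → Set (Finset α)) (v : ι → Finset α → ℝ) (E : Finset α) (ε : ℝ)
    (q : α → ℝ) (a : α → ι) : Prop :=
  ∀ i, IsDemand (F i) (v i) (askPrice q a ε i) {e ∈ E | a e = i}

namespace IsAuctionState

/- If agent `i` demands `D` strictly containing its goods, it buys all of `D` at its asking
prices. Each of the other agents only sees increased prices for goods that it no longer holds. -/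
theorem exists_sum_add_le [DecidableEq α] (hv : ∀ i, MnatConcaveOn (F i) (v i))
    (hF : ∀ i, F i ⊆ Set.Iic E) (hε : 0 ≤ ε) (h : IsAuctionState F v E ε q a)
    (hne : ¬ IsAuctionEquilibrium F v E ε q a) :
    ∃ q' a', IsAuctionState F v E ε q' a' ∧ ∑ e ∈ E, q e + ε ≤ ∑ e ∈ E, q' e := by
  choose D hD hheld using h
  obtain ⟨i, hi⟩ := not_forall.1 hne
  have hDE : D i ⊆ E := hF i (hD i).1
  obtain ⟨e₀, he₀, he₀i⟩ : ∃ e ∈ D i, a e ≠ i := by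
    by_contra! hDi
    have hshare : D i = {e ∈ E | a e = i} :=
      (hheld i).antisymm' fun e he => mem_filter.2 ⟨hDE he, hDi e he⟩
    exact hi (hshare ▸ hD i)
  set q' := (D i).piecewise (askPrice q a ε i) q with hq'
  set a' := (D i).piecewise (fun _ => i) a with ha'
  have hqq' : q ≤ q' := by
    intro e
    simp only [hq', piecewise, askPrice]
    split_ifs <;> linarith
  have hask (k : ι) : askPrice q a ε k ≤ askPrice q' a' ε k := by
    intro e
    simp only [hq', ha', piecewise, askPrice]
    grind
  have hheld' (k : ι) {e : α} (he : e ∈ E) (hek : a' e = k) :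
      e ∈ D k ∧ askPrice q' a' ε k e = askPrice q a ε k e := by
    by_cases heD : e ∈ D i
    · obtain rfl : i = k := by rwa [ha', piecewise_eq_of_mem _ _ _ heD] at hek
      exact ⟨heD, by simp [askPrice, hek, hq', heD]⟩
    · rw [ha', piecewise_eq_of_notMem _ _ _ heD] at hek
      exact ⟨hheld k (by simp [he, hek]), by simp [askPrice, hek, hq', ha', heD]⟩
  refine ⟨q', a', fun k => ?_, ?_⟩
  · obtain ⟨B, hB, hDB⟩ :=
      (hv k).exists_isDemand_of_le ((Set.finite_Iic E).subset (hF k)) (hask k) (hD k)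
    refine ⟨B, hB, fun e he => ?_⟩
    obtain ⟨heE, hek⟩ := mem_filter.1 he
    exact hDB e (hheld' k heE hek).1 (hheld' k heE hek).2
  · have hincrement : q' e₀ = q e₀ + ε := by simp [hq', he₀, askPrice, he₀i]
    have hrest : ∑ e ∈ E.erase e₀, q e ≤ ∑ e ∈ E.erase e₀, q' e := sum_le_sum fun e _ => hqq' e
    linarith [add_sum_erase E q (hDE he₀), add_sum_erase E q' (hDE he₀)]

theorem sum_le {C : ℝ} (hC : ∀ i, ∀ A ∈ F i, ∀ B ∈ F i, v i A - v i B ≤ C)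
    (hF : ∀ i, IsLowerSet (F i)) (h : IsAuctionState F v E ε q a) :
    ∑ e ∈ E, q e ≤ #E * C := by
  classical
  rw [← nsmul_eq_mul]
  refine sum_le_card_nsmul E q C fun e he => ?_
  obtain ⟨D, hD, hheld⟩ := h (a e)
  have heD : e ∈ D := hheld (by simp [he])
  have hDe : D.erase e ∈ F (a e) := hF _ (erase_subset e D) hD.1
  calc q e = askPrice q a ε (a e) e := by simp [askPrice]
    _ ≤ v (a e) D - v (a e) (D.erase e) := hD.price_le heD hDe
    _ ≤ C := hC _ D hD.1 _ hDe

theorem neg_const {C : ℝ} (hC : ∀ i, ∀ A ∈ F i, ∀ B ∈ F i, v i A - v i B ≤ C) (hC₀ : 0 ≤ C)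
    (hF : ∀ i, F i ⊆ Set.Iic E) (hne : ∀ i, (F i).Nonempty) {i₀ : ι} (hE : E ∈ F i₀) :
    IsAuctionState F v E ε (fun _ => -C) fun _ => i₀ := by
  classical
  intro i
  by_cases hi : i₀ = i
  · subst hi
    refine ⟨E, ⟨hE, fun B hB => ?_⟩, filter_subset _ E⟩
    simp only [netValue, askPrice, if_true, sum_const, nsmul_eq_mul]
    have hBE : B ⊆ E := hF i₀ hB
    obtain rfl | hssub := hBE.eq_or_ssubset
    · rfl
    · have hcard : (#B : ℝ) + 1 ≤ #E := mod_cast card_lt_card hssub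
      nlinarith [hC i₀ B hB E hE]
  · obtain ⟨D, hD, hDmax⟩ := (F i).exists_max_image (netValue (v i) (askPrice _ _ ε i))
      ((Set.finite_Iic E).subset (hF i)) (hne i)
    exact ⟨D, ⟨hD, hDmax⟩, by simp [hi]⟩

end IsAuctionState

theorem IsDemand.netValue_le_add {F : Set (Finset α)} {v : Finset α → ℝ} {i : ι} (hε : 0 ≤ ε)
    (h : IsDemand F v (askPrice q a ε i) {e ∈ E | a e = i}) {B : Finset α} (hB : B ∈ F) :
    netValue v q B ≤ netValue v q {e ∈ E | a e = i} + #B * ε := by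
  have hshare : ∑ e ∈ E with a e = i, askPrice q a ε i e = ∑ e ∈ E with a e = i, q e :=
    sum_congr rfl fun e he => if_pos (mem_filter.1 he).2
  have hbundle : ∑ e ∈ B, askPrice q a ε i e ≤ ∑ e ∈ B, q e + #B * ε := by
    rw [← nsmul_eq_mul, ← sum_const, ← sum_add_distrib]
    refine sum_le_sum fun e _ => ?_
    unfold askPrice
    split_ifs <;> linarith
  have hmax := h.2 B hB
  unfold netValue at hmax ⊢
  linarith

theorem exists_isAuctionEquilibrium [DecidableEq α] [Finite ι]
    (hv : ∀ i, MnatConcaveOn (F i) (v i)) (hF : ∀ i, F i ⊆ Set.Iic E)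
    (hlower : ∀ i, IsLowerSet (F i)) (hne : ∀ i, (F i).Nonempty) {i₀ : ι} (hE : E ∈ F i₀)
    (hε : 0 < ε) :
    ∃ q a, IsAuctionEquilibrium F v E ε q a := by
  have hfin (i : ι) : (F i).Finite := (Set.finite_Iic E).subset (hF i)
  obtain ⟨C, hC⟩ : ∃ C, ∀ i, ∀ A ∈ F i, ∀ B ∈ F i, v i A - v i B ≤ C := by
    obtain ⟨C, hC⟩ := (Set.finite_iUnion fun i =>
      (hfin i).image2 (fun A B => v i A - v i B) (hfin i)).bddAbove
    exact ⟨C, fun i A hA B hB => hC (Set.mem_iUnion_of_mem i (Set.mem_image2_of_mem hA hB))⟩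
  have hC₀ : 0 ≤ C := by simpa using hC i₀ E hE E hE
  set S : Set ℝ := {s | ∃ q a, IsAuctionState F v E ε q a ∧ ∑ e ∈ E, q e = s}
  have hS : BddAbove S := ⟨#E * C, by rintro _ ⟨q, a, h, rfl⟩; exact h.sum_le hC hlower⟩
  have hSne : S.Nonempty := ⟨_, _, _, IsAuctionState.neg_const hC hC₀ hF hne hE, rfl⟩
  obtain ⟨_, ⟨q, a, h, rfl⟩, hlast⟩ := exists_lt_of_lt_csSup hSne (sub_lt_self (sSup S) hε)
  refine ⟨q, a, by_contra fun hnot => ?_⟩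
  obtain ⟨q', a', h', hq'⟩ := h.exists_sum_add_le hv hF hε.le hnot
  linarith [le_csSup hS ⟨q', a', h', rfl⟩]

theorem IsAuctionEquilibrium.sum_netValue_add_sum_le [Fintype ι] (hF : ∀ i, F i ⊆ Set.Iic E)
    (hε : 0 ≤ ε) (h : IsAuctionEquilibrium F v E ε q a) {B : ι → Finset α}
    (hB : ∀ i, B i ∈ F i) :
    ∑ i, netValue (v i) q (B i) + ∑ e ∈ E, q e ≤
      ∑ i, v i {e ∈ E | a e = i} + Fintype.card ι * (#E * ε) := by
  have hbundle (i : ι) :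
      netValue (v i) q (B i) ≤ netValue (v i) q {e ∈ E | a e = i} + #E * ε := by
    have hcard : (#(B i) : ℝ) ≤ #E := mod_cast card_le_card (hF i (hB i))
    nlinarith [(h i).netValue_le_add hε (hB i)]
  calc ∑ i, netValue (v i) q (B i) + ∑ e ∈ E, q e
      ≤ ∑ i, (netValue (v i) q {e ∈ E | a e = i} + #E * ε) +
          ∑ i, ∑ e ∈ E with a e = i, q e := by
        rw [sum_fiberwise E a q]
        gcongr with i
        exact hbundle i
    _ = ∑ i, v i {e ∈ E | a e = i} + Fintype.card ι * (#E * ε) := by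
        simp only [netValue, sum_add_distrib, sum_sub_distrib, sum_const, nsmul_eq_mul, card_univ]
        ring

end Auction

/- The equilibria of the auction with increment `ε` have welfare at least `c - O(ε)`, and the
welfare takes only finitely many values. -/
theorem exists_le_sum_of_forall_price [DecidableEq α] {ι : Type*} [Fintype ι] [DecidableEq ι]
    {F : ι → Set (Finset α)} {v : ι → Finset α → ℝ} {E : Finset α}
    (hv : ∀ i, MnatConcaveOn (F i) (v i)) (hF : ∀ i, F i ⊆ Set.Iic E)
    (hlower : ∀ i, IsLowerSet (F i)) (hne : ∀ i, (F i).Nonempty) {i₀ : ι} (hE : E ∈ F i₀) {c : ℝ}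
    (hc : ∀ q : α → ℝ, ∃ B : ι → Finset α,
      (∀ i, B i ∈ F i) ∧ c ≤ ∑ i, netValue (v i) q (B i) + ∑ e ∈ E, q e) :
    ∃ a : α → ι, (∀ i, {e ∈ E | a e = i} ∈ F i) ∧ c ≤ ∑ i, v i {e ∈ E | a e = i} := by
  set W : Set ℝ := {w | ∃ a : α → ι,
    (∀ i, {e ∈ E | a e = i} ∈ F i) ∧ ∑ i, v i {e ∈ E | a e = i} = w}
  have hWfin : W.Finite := by
    refine ((Set.Finite.pi' fun i => (Set.finite_Iic E).subset (hF i)).image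
      fun A => ∑ i, v i (A i)).subset ?_
    rintro _ ⟨a, ha, rfl⟩
    exact ⟨_, ha, rfl⟩
  have happrox {δ : ℝ} (hδ : 0 < δ) : ∃ w ∈ W, c ≤ w + δ := by
    set ε := δ / (Fintype.card ι * #E + 1)
    have hε : 0 < ε := by positivity
    have hεδ : (Fintype.card ι * #E + 1) * ε = δ := mul_div_cancel₀ δ (by positivity)
    obtain ⟨q, a, ha⟩ := exists_isAuctionEquilibrium hv hF hlower hne hE hε
    obtain ⟨B, hB, hcB⟩ := hc q
    exact ⟨_, ⟨a, fun i => (ha i).1, rfl⟩,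
      by linarith [ha.sum_netValue_add_sum_le hF hε.le hB]⟩
  obtain ⟨w, hw, -⟩ := happrox one_pos
  obtain ⟨_, ⟨a, ha, rfl⟩, hmax⟩ := W.exists_max_image id hWfin ⟨w, hw⟩
  refine ⟨a, ha, le_of_forall_pos_le_add fun δ hδ => ?_⟩
  obtain ⟨w, hw, hcw⟩ := happrox hδ
  exact hcw.trans (add_le_add_left (hmax w hw) δ)

namespace MnatConcaveOn

variable [DecidableEq α] {f : Finset α → ℝ} {X Y I : Finset α}

theorem exists_le_netValue_add_netValue_add_sum (hf : MnatConcaveOn Set.univ f)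
    (hI : I ⊆ X \ Y) (q : α → ℝ) :
    ∃ K₁ ⊆ Y \ X, ∃ K₂ ⊆ Y \ X, #K₁ ≤ #I ∧
      f X + f Y ≤ netValue (fun J => f (X \ I ∪ J)) q K₁ +
        netValue (fun J => f (X ∩ Y ∪ I ∪ J)) q K₂ + ∑ e ∈ Y \ X, q e := by
  have hIX : I ⊆ X := hI.trans sdiff_subset
  have hXYI : Disjoint (X ∩ Y) I := (disjoint_sdiff_inter X Y).symm.mono_right hI
  have hIYX : Disjoint I (Y \ X) := disjoint_sdiff_sdiff.mono_left hI
  have hXY : Disjoint (X ∩ Y) (Y \ X) := disjoint_sdiff.mono_left inter_subset_left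
  have hY : X ∩ Y ∪ Y \ X = Y := inter_comm X Y ▸ sup_inf_sdiff Y X
  obtain ⟨K₁, hK₁, K₂, hK₂, hcard, h⟩ := (hf.netValue q).exists_exchange_of_disjoint
    inter_subset_left hIX hXYI.symm hIYX (Subset.refl (Y \ X))
  have hXIK₁ : Disjoint (X \ I) K₁ := (disjoint_sdiff.mono_left sdiff_subset).mono_right hK₁
  have hXYIK₂ : Disjoint (X ∩ Y ∪ I) K₂ :=
    (disjoint_union_left.2 ⟨hXY, hIYX⟩).mono_right hK₂
  refine ⟨K₁, hK₁, K₂, hK₂, hcard, ?_⟩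
  have hsumY := sum_union (f := q) hXY
  rw [hY] at h hsumY
  simp only [netValue, sum_union hXIK₁, sum_union hXYIK₂, sum_union hXYI] at h ⊢
  linarith [sum_sdiff (f := q) hIX]

theorem exists_multiple_exchange_of_univ (hf : MnatConcaveOn Set.univ f) (hI : I ⊆ X \ Y) :
    ∃ J ⊆ Y \ X, #J ≤ #I ∧ f X + f Y ≤ f (X \ I ∪ J) + f (Y \ J ∪ I) := by
  set base : Bool → Finset α := fun b => bif b then X \ I else X ∩ Y ∪ I
  set bound : Bool → ℕ := fun b => bif b then #X else #(X ∪ Y)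
  have hIX : I ⊆ X := hI.trans sdiff_subset
  have hbaseX : ∀ b, base b ⊆ X := Bool.rec (union_subset inter_subset_left hIX) sdiff_subset
  have hbaseE (b : Bool) : Disjoint (base b) (Y \ X) := disjoint_sdiff.mono_left (hbaseX b)
  have hbound : ∀ b, #X ≤ bound b := Bool.rec (card_le_card subset_union_left) le_rfl
  have hcard {J : Finset α} (hJ : J ⊆ Y \ X) : #(X \ I ∪ J) ≤ #X ↔ #J ≤ #I := by
    rw [card_union_of_disjoint ((hbaseE true).mono_right hJ : Disjoint (X \ I) J),
      ← card_sdiff_add_card_eq_card hIX, Nat.add_le_add_iff_left]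
  have hfull {J : Finset α} (hJ : J ⊆ Y \ X) : #(X ∩ Y ∪ I ∪ J) ≤ #(X ∪ Y) :=
    card_le_card (union_subset_union (hbaseX false) (hJ.trans sdiff_subset))
  have hprices (q : α → ℝ) : ∃ B : Bool → Finset α,
      (∀ b, B b ⊆ Y \ X ∧ #(base b ∪ B b) ≤ bound b) ∧
        f X + f Y ≤ ∑ b, netValue (fun J => f (base b ∪ J)) q (B b) + ∑ e ∈ Y \ X, q e := by
    obtain ⟨K₁, hK₁, K₂, hK₂, hK₁I, h⟩ := hf.exists_le_netValue_add_netValue_add_sum hI q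
    refine ⟨fun b => bif b then K₁ else K₂,
      Bool.rec ⟨hK₂, hfull hK₂⟩ ⟨hK₁, (hcard hK₁).2 hK₁I⟩, ?_⟩
    rwa [Fintype.sum_bool]
  obtain ⟨a, ha, h⟩ := exists_le_sum_of_forall_price (i₀ := false)
    (fun b => (hf.truncation (bound b)).contraction (hbaseE b)) (fun b J hJ => hJ.1)
    (fun b J J' hJ'J hJ => ⟨hJ'J.trans hJ.1,
      (card_le_card (union_subset_union_right hJ'J)).trans hJ.2⟩)
    (fun b => ⟨∅, empty_subset _, by simpa using (card_le_card (hbaseX b)).trans (hbound b)⟩)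
    ⟨Subset.rfl, hfull Subset.rfl⟩ hprices
  set J : Finset α := {e ∈ Y \ X | a e = true}
  have hcompl : X ∩ Y ∪ I ∪ {e ∈ Y \ X | a e = false} = Y \ J ∪ I := by
    ext e
    simp only [J, mem_union, mem_inter, mem_sdiff, mem_filter]
    grind
  refine ⟨J, filter_subset _ _, (hcard (filter_subset _ _)).1 (ha true).2, ?_⟩
  rw [Fintype.sum_bool] at h
  rwa [← hcompl]

end MnatConcaveOn

section Penalty

variable [DecidableEq α] {F : Set (Finset α)} {f : Finset α → ℝ} {M : ℝ}

theorem symmDiff_insert_insert {i : α} {A B : Finset α} (hA : i ∉ A) (hB : i ∉ B) :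
    insert i A ∆ insert i B = A ∆ B := by
  ext a
  simp only [mem_symmDiff, mem_insert]
  grind

theorem symmDiff_erase_erase {i : α} {A B : Finset α} (hA : i ∈ A) (hB : i ∈ B) :
    A.erase i ∆ B.erase i = A ∆ B := by
  rw [← symmDiff_insert_insert (notMem_erase i A) (notMem_erase i B), insert_erase hA,
    insert_erase hB]

theorem card_symmDiff_erase_add_card_symmDiff_insert_le {X Y A B : Finset α} {i : α} (hX : i ∈ X)
    (hY : i ∉ Y) (h : i ∉ A ∨ i ∈ B) :
    #(X.erase i ∆ A) + #(insert i Y ∆ B) ≤ #(X ∆ A) + #(Y ∆ B) := by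
  obtain hA | hB := h
  · have hXA : insert i (X.erase i ∆ A) = X ∆ A := by
      ext a
      simp only [mem_symmDiff, mem_insert]
      grind
    have hYB : insert i Y ∆ B ⊆ insert i (Y ∆ B) := by
      intro a
      simp only [mem_symmDiff, mem_insert]
      grind
    rw [← hXA, card_insert_of_notMem (by simp [mem_symmDiff, hA])]
    linarith [card_le_card hYB, card_insert_le i (Y ∆ B)]
  · have hYB : insert i (insert i Y ∆ B) = Y ∆ B := by
      ext a
      simp only [mem_symmDiff, mem_insert]
      grind
    have hXA : X.erase i ∆ A ⊆ insert i (X ∆ A) := by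
      intro a
      simp only [mem_symmDiff, mem_insert]
      grind
    rw [← hYB, card_insert_of_notMem (by simp [mem_symmDiff, hB])]
    linarith [card_le_card hXA, card_insert_le i (X ∆ A)]

/-- The best value `f A` of a member `A` of `F`, penalized by `M` for each element in which `A`
differs from `Z`. For finite nonempty `F` and large `M`, this is a real-valued substitute for the
extension of `f` by `-∞` outside `F`. -/
noncomputable def penaltyEnvelope (F : Set (Finset α)) (f : Finset α → ℝ) (M : ℝ)
    (Z : Finset α) : ℝ :=
  sSup ((fun A => f A - M * #(Z ∆ A)) '' F)

theorem le_penaltyEnvelope (hF : F.Finite) {A : Finset α} (hA : A ∈ F) (Z : Finset α) :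
    f A - M * #(Z ∆ A) ≤ penaltyEnvelope F f M Z :=
  le_csSup (hF.image _).bddAbove (Set.mem_image_of_mem _ hA)

theorem exists_eq_penaltyEnvelope (hF : F.Finite) (hne : F.Nonempty) (Z : Finset α) :
    ∃ A ∈ F, f A - M * #(Z ∆ A) = penaltyEnvelope F f M Z :=
  (hne.image _).csSup_mem (hF.image _)

theorem penaltyEnvelope_eq_or_le (hF : F.Finite) (hne : F.Nonempty) {c : ℝ}
    (hc : ∀ A ∈ F, f A ≤ c) (hM : 0 ≤ M) (Z : Finset α) :
    Z ∈ F ∧ penaltyEnvelope F f M Z = f Z ∨ penaltyEnvelope F f M Z ≤ c - M := by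
  obtain ⟨A, hA, hZA⟩ := exists_eq_penaltyEnvelope (f := f) (M := M) hF hne Z
  obtain rfl | hne := eq_or_ne Z A
  · exact .inl ⟨hA, by simp [← hZA]⟩
  · right
    have hdist : (1 : ℝ) ≤ #(Z ∆ A) := by
      rw [Nat.one_le_cast, Nat.one_le_iff_ne_zero, Ne, card_eq_zero]
      exact mt symmDiff_eq_bot.1 hne
    nlinarith [hc A hA]

theorem le_penaltyEnvelope_add_penaltyEnvelope (hF : F.Finite) (hM : 0 ≤ M)
    {A B A' B' X Y X' Y' : Finset α} (hA' : A' ∈ F) (hB' : B' ∈ F) (h : f A + f B ≤ f A' + f B')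
    (hdist : #(X' ∆ A') + #(Y' ∆ B') ≤ #(X ∆ A) + #(Y ∆ B)) :
    f A - M * #(X ∆ A) + (f B - M * #(Y ∆ B)) ≤
      penaltyEnvelope F f M X' + penaltyEnvelope F f M Y' := by
  have hdist : (#(X' ∆ A') + #(Y' ∆ B') : ℝ) ≤ #(X ∆ A) + #(Y ∆ B) := mod_cast hdist
  linarith [le_penaltyEnvelope (f := f) (M := M) hF hA' X',
    le_penaltyEnvelope (f := f) (M := M) hF hB' Y', mul_le_mul_of_nonneg_left hdist hM]

namespace MnatConcaveOn

protected theorem penaltyEnvelope (hf : MnatConcaveOn F f) (hF : F.Finite) (hne : F.Nonempty)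
    (hM : 0 ≤ M) : MnatConcaveOn Set.univ (penaltyEnvelope F f M) := by
  intro X _ Y _ i hi
  obtain ⟨hiX, hiY⟩ := mem_sdiff.1 hi
  obtain ⟨A, hA, hXA⟩ := exists_eq_penaltyEnvelope (f := f) (M := M) hF hne X
  obtain ⟨B, hB, hYB⟩ := exists_eq_penaltyEnvelope (f := f) (M := M) hF hne Y
  have hle {A' B' X' Y' : Finset α} (hA' : A' ∈ F) (hB' : B' ∈ F) (h : f A + f B ≤ f A' + f B')
      (hdist : #(X' ∆ A') + #(Y' ∆ B') ≤ #(X ∆ A) + #(Y ∆ B)) :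
      penaltyEnvelope F f M X + penaltyEnvelope F f M Y ≤
        penaltyEnvelope F f M X' + penaltyEnvelope F f M Y' :=
    hXA ▸ hYB ▸ le_penaltyEnvelope_add_penaltyEnvelope hF hM hA' hB' h hdist
  by_cases hAB : i ∉ A ∨ i ∈ B
  · exact .inl ⟨trivial, trivial, hle hA hB le_rfl
      (card_symmDiff_erase_add_card_symmDiff_insert_le hiX hiY hAB)⟩
  · obtain ⟨hiA, hiB⟩ : i ∈ A ∧ i ∉ B := by simpa using hAB
    have hXAi := symmDiff_erase_erase hiX hiA
    have hYBi := symmDiff_insert_insert hiY hiB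
    obtain ⟨hA', hB', h⟩ | ⟨j, hj, hA', hB', h⟩ := hf hA hB (mem_sdiff.2 ⟨hiA, hiB⟩)
    · exact .inl ⟨trivial, trivial, hle hA' hB' h (by rw [hXAi, hYBi])⟩
    · obtain ⟨hjB, hjA⟩ := mem_sdiff.1 hj
      have hjA' : j ∉ A.erase i := mt mem_of_mem_erase hjA
      have hjB' : j ∈ insert i B := mem_insert_of_mem hjB
      by_cases hjYX : j ∈ Y \ X
      · obtain ⟨hjY, hjX⟩ := mem_sdiff.1 hjYX
        refine .inr ⟨j, hjYX, trivial, trivial, hle hA' hB' h ?_⟩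
        rw [symmDiff_insert_insert (mt mem_of_mem_erase hjX) hjA',
          symmDiff_erase_erase (mem_insert_of_mem hjY) hjB', hXAi, hYBi]
      · refine .inl ⟨trivial, trivial, hle hA' hB' h ?_⟩
        have hdist := card_symmDiff_erase_add_card_symmDiff_insert_le (A := insert i Y)
          (B := X.erase i) hjB' hjA' (by grind)
        rw [symmDiff_comm _ (insert i Y), symmDiff_comm _ (X.erase i), symmDiff_comm _ (insert i Y),
          symmDiff_comm _ (X.erase i), hXAi, hYBi] at hdist
        linarith

theorem exists_multiple_exchange (hf : MnatConcaveOn F f) {X Y I : Finset α} (hX : X ∈ F)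
    (hY : Y ∈ F) (hI : I ⊆ X \ Y) :
    ∃ J ⊆ Y \ X, #J ≤ #I ∧ X \ I ∪ J ∈ F ∧ Y \ J ∪ I ∈ F ∧
      f X + f Y ≤ f (X \ I ∪ J) + f (Y \ J ∪ I) := by
  set G := F ∩ Set.Iic (X ∪ Y)
  have hG : G.Finite := (Set.finite_Iic _).inter_of_right F
  have hXG : X ∈ G := ⟨hX, subset_union_left⟩
  have hYG : Y ∈ G := ⟨hY, subset_union_right⟩
  obtain ⟨c, hc⟩ : ∃ c, ∀ A ∈ G, f A ≤ c :=
    (hG.image f).bddAbove.imp fun c hc A hA => hc (Set.mem_image_of_mem f hA)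
  set M := 2 * c - (f X + f Y) + 1
  have hM : 0 ≤ M := by linarith [hc X hXG, hc Y hYG]
  obtain ⟨J, hJ, hcard, h⟩ :=
    ((hf.inter_Iic (X ∪ Y)).penaltyEnvelope hG ⟨X, hXG⟩ hM).exists_multiple_exchange_of_univ hI
  have hX' := le_penaltyEnvelope (f := f) (M := M) hG hXG X
  have hY' := le_penaltyEnvelope (f := f) (M := M) hG hYG Y
  simp only [symmDiff_self, bot_eq_empty, card_empty, Nat.cast_zero, mul_zero, sub_zero] at hX' hY'
  have hdom := penaltyEnvelope_eq_or_le hG ⟨X, hXG⟩ hc hM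
  refine ⟨J, hJ, hcard, ?_⟩
  obtain ⟨hA, hAf⟩ | hA := hdom (X \ I ∪ J) <;> obtain ⟨hB, hBf⟩ | hB := hdom (Y \ J ∪ I)
  · exact ⟨hA.1, hB.1, by linarith⟩
  · linarith [hc _ hA]
  · linarith [hc _ hB]
  · linarith

end MnatConcaveOn

end Penalty

theorem coe_unbotD_of_ne_bot {β : Type*} {x : WithBot β} (hx : x ≠ ⊥) (b : β) :
    ((x.unbotD b : β) : WithBot β) = x := by
  lift x to β using hx
  rfl

theorem MnatConcave.mnatConcaveOn [DecidableEq α] {f : Finset α → WithBot ℝ} (hf : MnatConcave f) :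
    MnatConcaveOn {Z | f Z ≠ ⊥} fun Z => (f Z).unbotD 0 := by
  have hsum {A B A' B' : Finset α} (hA : f A ≠ ⊥) (hB : f B ≠ ⊥) (h : f A + f B ≤ f A' + f B') :
      f A' ≠ ⊥ ∧ f B' ≠ ⊥ ∧
        (f A).unbotD 0 + (f B).unbotD 0 ≤ (f A').unbotD 0 + (f B').unbotD 0 := by
    obtain ⟨hA', hB'⟩ :=
      WithBot.add_ne_bot.1 (ne_bot_of_le_ne_bot (WithBot.add_ne_bot.2 ⟨hA, hB⟩) h)
    rw [← coe_unbotD_of_ne_bot hA 0, ← coe_unbotD_of_ne_bot hB 0,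
      ← coe_unbotD_of_ne_bot hA' 0, ← coe_unbotD_of_ne_bot hB' 0] at h
    exact ⟨hA', hB', mod_cast h⟩
  intro X hX Y hY i hi
  obtain h | h := le_max_iff.1 (hf X Y i hi)
  · exact .inl (hsum hX hY h)
  · obtain ⟨j, hj, h⟩ := (Finset.le_sup_iff (WithBot.bot_lt_iff_ne_bot.2
      (WithBot.add_ne_bot.2 ⟨hX, hY⟩))).1 h
    exact .inr ⟨j, hj, hsum hX hY h⟩

end

theorem stmt_18_general {α : Type*} [DecidableEq α] (f : Finset α → WithBot ℝ)
    (hf : MnatConcave f) :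
    ∀ X Y : Finset α, ∀ I ⊆ X \ Y,
      ∃ J ⊆ Y \ X, J.card ≤ I.card ∧ f X + f Y ≤ f (X \ I ∪ J) + f (Y \ J ∪ I) := by
  intro X Y I hI
  by_cases hX : f X = ⊥
  · exact ⟨∅, by simp [hX]⟩
  by_cases hY : f Y = ⊥
  · exact ⟨∅, by simp [hY]⟩
  obtain ⟨J, hJ, hcard, hXJ, hYJ, h⟩ := hf.mnatConcaveOn.exists_multiple_exchange hX hY hI
  refine ⟨J, hJ, hcard, ?_⟩
  rw [← coe_unbotD_of_ne_bot hX 0, ← coe_unbotD_of_ne_bot hY 0, ← coe_unbotD_of_ne_bot hXJ 0,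
    ← coe_unbotD_of_ne_bot hYJ 0]
  exact mod_cast h

theorem stmt_18 {α : Type*} [Fintype α] [DecidableEq α] (f : Finset α → WithBot ℝ)
    (hne : ∃ X, f X ≠ ⊥) (hf : MnatConcave f) :
    ∀ X Y : Finset α, ∀ I ⊆ X \ Y,
      ∃ J ⊆ Y \ X, J.card ≤ I.card ∧
        f X + f Y ≤ f ((X \ I) ∪ J) + f ((Y \ J) ∪ I) :=
  stmt_18_general f hf
end
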